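/- arXiv:2008.10097 — 2 statements merged into one kernel-verified Lean document; each statement's English description precedes it below -/
import Mathlib

section
/- In the correlated Gaussian Wigner detection problem, if the sequence of correlation parameters ρ_n ∈ [0,1] satisfies ρ_n² ≥ 4·log n/(n−1) for all sufficiently large n, then the total variation distance TV(P_n^{ρ_n}, Q_n) → 1 as n → ∞; in particular strong detection is possible. -/
/-!
Strong detection is achieved by scanning over all permutations with a likelihood-type score.
Put `r = √(4 log n / (n-1))`, which for large `n` is at most `ρ_n`, let `N = n(n-1)/2` be the number
of edges, and for a permutation `π` set
`score r π (A, B) = ∑ e, (r A_e B_{π(e)} - r² A_e² / 2)`.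
The test rejects the null model when some `π` has score at least `t = n log n - n/2`.

* Under `Q_n`, conditionally on `A`, the variable `exp (score r π)` has mean exactly `1`, because
  `r² A_e² / 2` is the log-moment generating function of a standard Gaussian at `r A_e`. Markov's
  inequality and a union bound over the `n!` permutations give false alarm probability at most
  `n! exp (-t)` (`null_testSet`), which tends to `0` by Stirling's formula: `n!` is
  `exp (n log n - n)` up to a factor of order `√n`.
* Under `P_n^ρ`, the score of the planted permutation is a sum of `N` i.i.d. terms
  `c W² + d W Z` with `c = rρ - r²/2` and `d = r √(1-ρ²)`. Its mean is `N c ≥ N r² / 2 = n log n`,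
  and its variance is `O(N r²) = O(n log n)`, so by Chebyshev's inequality it falls below
  `n log n - n/2` with probability `O(log n / n)` (`planted_testSet_compl`).

Taking `r`, and not `ρ_n`, as the parameter of the score avoids any singularity as `ρ_n` approaches
`1` and keeps the fluctuations of order `√(n log n)`, well below the margin `n/2`.
-/


open MeasureTheory ProbabilityTheory Filter

noncomputable section

/-- The set of potential edges on `n` vertices: unordered pairs of distinct elements of `Fin n`. -/
abbrev Edge (n : ℕ) := {e : Sym2 (Fin n) // ¬ e.IsDiag}

instance (n : ℕ) : MeasurableSpace (Equiv.Perm (Fin n)) := ⊤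

/-- The uniform distribution on permutations of `[n]`. -/
def permUniform (n : ℕ) : Measure (Equiv.Perm (Fin n)) :=
  (PMF.uniformOfFintype (Equiv.Perm (Fin n))).toMeasure

/-- The action of a node permutation on edges, `π({i,j}) = {π(i), π(j)}`. -/
def edgeMap {n : ℕ} (π : Equiv.Perm (Fin n)) (e : Edge n) : Edge n :=
  ⟨Sym2.map π e.1, fun h => e.2 ((Sym2.isDiag_map π.injective).mp h)⟩

/-- i.i.d. standard Gaussian edge weights. -/
def gaussianEdges (n : ℕ) : Measure (Edge n → ℝ) :=
  Measure.pi fun _ => gaussianReal 0 1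

/-- The null model `Q_n` of the correlated Gaussian Wigner problem: two independent families of
i.i.d. standard Gaussian edge weights. -/
def QGauss (n : ℕ) : Measure ((Edge n → ℝ) × (Edge n → ℝ)) :=
  (gaussianEdges n).prod (gaussianEdges n)

/-- The planted model `P_n^ρ`: draw `π` uniformly, and i.i.d. standard Gaussian families `W`, `Z`;
output `A = W` and `B` with `B_{π(e)} = ρ W_e + √(1-ρ²) Z_e`, i.e.
`B_f = ρ W_{π⁻¹(f)} + √(1-ρ²) Z_{π⁻¹(f)}`. -/
def PGauss (n : ℕ) (ρ : ℝ) : Measure ((Edge n → ℝ) × (Edge n → ℝ)) :=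
  Measure.map
    (fun ω : Equiv.Perm (Fin n) × (Edge n → ℝ) × (Edge n → ℝ) =>
      (ω.2.1,
       fun f => ρ * ω.2.1 (edgeMap ω.1⁻¹ f) + Real.sqrt (1 - ρ ^ 2) * ω.2.2 (edgeMap ω.1⁻¹ f)))
    ((permUniform n).prod ((gaussianEdges n).prod (gaussianEdges n)))

/-- Total variation distance: `sup` over measurable sets `S` of `|P(S) - Q(S)|`. -/
def TV {Ω : Type*} [MeasurableSpace Ω] (P Q : Measure Ω) : ℝ :=
  ⨆ S : {S : Set Ω // MeasurableSet S}, |(P S.1).toReal - (Q S.1).toReal|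

/-! ### The score and its behaviour under the null model -/

/-- Chernoff bound at exponent one: `exp (∑ f, (a f * b f - a f ^ 2 / 2))` has mean `1` when the
`b f` are i.i.d. standard Gaussian. -/
lemma pi_gaussian_chernoff {ι : Type*} [Fintype ι] (a : ι → ℝ) (t : ℝ) :
    (Measure.pi fun _ : ι => gaussianReal 0 1).real {b | t ≤ ∑ f, (a f * b f - a f ^ 2 / 2)}
      ≤ Real.exp (-t) := by
  have hprod : ∀ b : ι → ℝ, Real.exp (∑ f, (a f * b f - a f ^ 2 / 2))
      = ∏ f, (Real.exp (a f * b f) * Real.exp (-(a f ^ 2 / 2))) := by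
    intro b
    rw [Real.exp_sum]
    refine Finset.prod_congr rfl fun f _ => ?_
    rw [← Real.exp_add]; ring_nf
  have hint : Integrable (fun b : ι → ℝ => Real.exp (∑ f, (a f * b f - a f ^ 2 / 2)))
      (Measure.pi fun _ : ι => gaussianReal 0 1) := by
    simp_rw [hprod]
    exact Integrable.fintype_prod (f := fun f x => Real.exp (a f * x) * Real.exp (-(a f ^ 2 / 2)))
      fun f => (integrable_exp_mul_gaussianReal (a f)).mul_const _
  have hval : ∫ b : ι → ℝ, Real.exp (∑ f, (a f * b f - a f ^ 2 / 2))
      ∂(Measure.pi fun _ : ι => gaussianReal 0 1) = 1 := by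
    simp_rw [hprod]
    rw [integral_fintype_prod_eq_prod
      (f := fun f x => Real.exp (a f * x) * Real.exp (-(a f ^ 2 / 2)))]
    refine Finset.prod_eq_one fun f _ => ?_
    rw [integral_mul_const]
    have := mgf_gaussianReal (p := gaussianReal 0 1) (X := id) (μ := 0) (v := 1)
      Measure.map_id (a f)
    simp only [mgf, id] at this
    rw [this, ← Real.exp_add]
    simp
  have hm := mul_meas_ge_le_integral_of_nonneg
    (Eventually.of_forall fun b : ι → ℝ =>
      (Real.exp_pos (∑ f, (a f * b f - a f ^ 2 / 2))).le) hint (Real.exp t)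
  rw [hval] at hm
  simp only [Real.exp_le_exp] at hm
  rw [Real.exp_neg, ← one_div, le_div_iff₀ (Real.exp_pos t), mul_comm]
  exact hm

/-- `edgeMap π` as a bijection of the edge set. -/
def edgeEquiv {n : ℕ} (π : Equiv.Perm (Fin n)) : Edge n ≃ Edge n where
  toFun := edgeMap π
  invFun := edgeMap π⁻¹
  left_inv e := by
    apply Subtype.ext
    simp [edgeMap, Sym2.map_map]
  right_inv e := by
    apply Subtype.ext
    simp [edgeMap, Sym2.map_map]

/-- The score of the alignment `π` on the pair `x = (A, B)`, namely
`∑ e, (r A_e B_{π(e)} - (r A_e)² / 2)`: the log-likelihood ratio, given `A`, of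
`B_{π(e)} = r A_e + noise` with unit-variance noise against pure noise. -/
def score {n : ℕ} (r : ℝ) (π : Equiv.Perm (Fin n)) (x : (Edge n → ℝ) × (Edge n → ℝ)) : ℝ :=
  ∑ e, (r * x.1 e * x.2 (edgeMap π e) - (r * x.1 e) ^ 2 / 2)

lemma measurable_score {n : ℕ} (r : ℝ) (π : Equiv.Perm (Fin n)) : Measurable (score r π) := by
  unfold score
  fun_prop

instance (n : ℕ) : IsProbabilityMeasure (gaussianEdges n) := by
  unfold gaussianEdges; infer_instance

instance (n : ℕ) : IsProbabilityMeasure (permUniform n) := by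
  unfold permUniform; infer_instance

instance (n : ℕ) : IsProbabilityMeasure (QGauss n) := by
  unfold QGauss; infer_instance

/-- For fixed `A`, reindexing the edges by `π` reduces the tail of the score to
`pi_gaussian_chernoff`; the bound then survives averaging over `A`. -/
lemma null_score_tail {n : ℕ} (r t : ℝ) (π : Equiv.Perm (Fin n)) :
    QGauss n {x | t ≤ score r π x} ≤ ENNReal.ofReal (Real.exp (-t)) := by
  have hms : MeasurableSet {x : (Edge n → ℝ) × (Edge n → ℝ) | t ≤ score r π x} :=
    measurableSet_le measurable_const (measurable_score r π)
  rw [QGauss, Measure.prod_apply hms]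
  calc _ ≤ ∫⁻ _ : Edge n → ℝ, ENNReal.ofReal (Real.exp (-t)) ∂(gaussianEdges n) := by
        refine lintegral_mono fun A => ?_
        have hc := pi_gaussian_chernoff (fun f => r * A ((edgeEquiv π).symm f)) t
        have hset : (Prod.mk A ⁻¹' {x : (Edge n → ℝ) × (Edge n → ℝ) | t ≤ score r π x})
            = {b | t ≤ ∑ f, (r * A ((edgeEquiv π).symm f) * b f
                - (r * A ((edgeEquiv π).symm f)) ^ 2 / 2)} := by
          ext b
          have hsum : score r π (A, b) = ∑ f, (r * A ((edgeEquiv π).symm f) * b f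
              - (r * A ((edgeEquiv π).symm f)) ^ 2 / 2) :=
            Fintype.sum_equiv (edgeEquiv π) _ _ fun e => by
              rw [Equiv.symm_apply_apply]; rfl
          simp only [Set.mem_preimage, Set.mem_ofPred_eq, hsum]
        rw [hset, ← ofReal_measureReal]
        exact ENNReal.ofReal_le_ofReal hc
    _ = _ := by simp

/-- The rejection region of the scan test: some permutation has score at least `t`. -/
def testSet (n : ℕ) (r t : ℝ) : Set ((Edge n → ℝ) × (Edge n → ℝ)) :=
  ⋃ π : Equiv.Perm (Fin n), {x | t ≤ score r π x}

lemma measurableSet_testSet (n : ℕ) (r t : ℝ) : MeasurableSet (testSet n r t) :=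
  MeasurableSet.iUnion fun π => measurableSet_le measurable_const (measurable_score r π)

lemma null_testSet (n : ℕ) (r t : ℝ) :
    (QGauss n).real (testSet n r t) ≤ n.factorial * Real.exp (-t) := by
  have h : QGauss n (testSet n r t) ≤ ENNReal.ofReal (n.factorial * Real.exp (-t)) := by
    calc _ ≤ ∑ π : Equiv.Perm (Fin n), QGauss n {x | t ≤ score r π x} :=
          measure_iUnion_fintype_le _ _
      _ ≤ ∑ π : Equiv.Perm (Fin n), ENNReal.ofReal (Real.exp (-t)) :=
          Finset.sum_le_sum fun π _ => null_score_tail r t π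
      _ = _ := by
          rw [Finset.sum_const, Finset.card_univ, Fintype.card_perm, Fintype.card_fin,
            nsmul_eq_mul, ENNReal.ofReal_mul (by positivity), ENNReal.ofReal_natCast]
  exact ENNReal.toReal_le_of_le_ofReal (by positivity) h

/-! ### Concentration of the planted score -/

/-- The fourth moment of the standard Gaussian; only its finiteness matters. -/
def gaussFour : ℝ := ∫ x, x ^ 4 ∂(gaussianReal 0 1)

lemma gaussFour_nonneg : 0 ≤ gaussFour := integral_nonneg fun x => by positivity

lemma integrable_gaussian_pow (k : ℕ) : Integrable (fun x : ℝ => x ^ k) (gaussianReal 0 1) := by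
  have := (memLp_id_gaussianReal (μ := 0) (v := 1) k).integrable_norm_pow'
  refine this.mono (by fun_prop) (Eventually.of_forall fun x => ?_)
  simp

lemma gaussian_second_moment : ∫ x, x ^ 2 ∂(gaussianReal 0 1) = 1 := by
  have := variance_fun_id_gaussianReal (μ := 0) (v := 1)
  rw [variance_of_integral_eq_zero (by fun_prop) (by simp)] at this
  simpa using this

/-- The law of a pair of independent standard Gaussians. -/
abbrev γγ : Measure (ℝ × ℝ) := (gaussianReal 0 1).prod (gaussianReal 0 1)

/-- The contribution `c W² + d W Z` of one edge to the planted score, as a function of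
`(W, Z)`. -/
def pairStat (c d : ℝ) (p : ℝ × ℝ) : ℝ := c * p.1 ^ 2 + d * (p.1 * p.2)

lemma pairStat_mean (c d : ℝ) : Integrable (pairStat c d) γγ ∧ ∫ p, pairStat c d p ∂γγ = c := by
  have h1 : Integrable (fun p : ℝ × ℝ => p.1 ^ 2) γγ := (integrable_gaussian_pow 2).comp_fst _
  have h2 : Integrable (fun p : ℝ × ℝ => p.1 * p.2) γγ := by
    have := (integrable_gaussian_pow 1).mul_prod (integrable_gaussian_pow 1)
    simpa using this
  refine ⟨(h1.const_mul c).add (h2.const_mul d), ?_⟩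
  unfold pairStat
  rw [integral_add (h1.const_mul c) (h2.const_mul d), integral_const_mul, integral_const_mul,
    integral_prod_mul (fun x : ℝ => x) (fun x : ℝ => x),
    integral_fun_fst (μ := gaussianReal 0 1) (ν := gaussianReal 0 1) (fun x : ℝ => x ^ 2),
    gaussian_second_moment]
  simp

lemma pairStat_sq (c d : ℝ) : MemLp (pairStat c d) 2 γγ ∧
    Var[pairStat c d; γγ] ≤ 2 * (c ^ 2 * gaussFour + d ^ 2) := by
  have h1 : Integrable (fun p : ℝ × ℝ => p.1 ^ 4) γγ := (integrable_gaussian_pow 4).comp_fst _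
  have h2 : Integrable (fun p : ℝ × ℝ => p.1 ^ 2 * p.2 ^ 2) γγ :=
    (integrable_gaussian_pow 2).mul_prod (integrable_gaussian_pow 2)
  have hmeas : Measurable (pairStat c d) := by unfold pairStat; fun_prop
  have hdom : Integrable (fun p : ℝ × ℝ =>
      2 * (c ^ 2 * p.1 ^ 4 + d ^ 2 * (p.1 ^ 2 * p.2 ^ 2))) γγ :=
    ((h1.const_mul _).add (h2.const_mul _)).const_mul 2
  have hle : ∀ p, pairStat c d p ^ 2 ≤ 2 * (c ^ 2 * p.1 ^ 4 + d ^ 2 * (p.1 ^ 2 * p.2 ^ 2)) := by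
    intro p
    unfold pairStat
    nlinarith [sq_nonneg (c * p.1 ^ 2 - d * (p.1 * p.2))]
  have hsq : Integrable (fun p => pairStat c d p ^ 2) γγ := by
    refine hdom.mono' (by fun_prop) (Eventually.of_forall fun p => ?_)
    rw [Real.norm_of_nonneg (sq_nonneg _)]
    exact hle p
  have hmem : MemLp (pairStat c d) 2 γγ :=
    (memLp_two_iff_integrable_sq hmeas.aestronglyMeasurable).2 hsq
  refine ⟨hmem, ?_⟩
  calc Var[pairStat c d; γγ] ≤ ∫ p, pairStat c d p ^ 2 ∂γγ :=
        variance_le_expectation_sq hmeas.aestronglyMeasurable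
    _ ≤ ∫ p : ℝ × ℝ, 2 * (c ^ 2 * p.1 ^ 4 + d ^ 2 * (p.1 ^ 2 * p.2 ^ 2)) ∂γγ :=
        integral_mono hsq hdom hle
    _ = _ := by
        rw [integral_const_mul, integral_add (h1.const_mul _) (h2.const_mul _),
          integral_const_mul, integral_const_mul,
          integral_prod_mul (fun x : ℝ => x ^ 2) (fun x : ℝ => x ^ 2),
          integral_fun_fst (μ := gaussianReal 0 1) (ν := gaussianReal 0 1) (fun x : ℝ => x ^ 4),
          gaussian_second_moment]
        simp [gaussFour]

/-- Chebyshev's inequality for the sum of `pairStat c d` over independent edges. -/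
lemma pair_sum_tail {ι : Type*} [Fintype ι] (c d s : ℝ) (hs : 0 < s) :
    ((Measure.pi fun _ : ι => gaussianReal 0 1).prod
      (Measure.pi fun _ : ι => gaussianReal 0 1)).real
      {w | ∑ e, pairStat c d (w.1 e, w.2 e) < Fintype.card ι * c - s}
      ≤ Fintype.card ι * (2 * (c ^ 2 * gaussFour + d ^ 2)) / s ^ 2 := by
  -- Regroup the two edge-indexed families into one i.i.d. family of pairs.
  have hmp := measurePreserving_arrowProdEquivProdArrow ℝ ℝ ι (fun _ => gaussianReal 0 1)
    (fun _ => gaussianReal 0 1)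
  have hmeas : Measurable (pairStat c d) := by unfold pairStat; fun_prop
  have hset : MeasurableSet {w : (ι → ℝ) × (ι → ℝ) |
      ∑ e, pairStat c d (w.1 e, w.2 e) < Fintype.card ι * c - s} :=
    measurableSet_lt (by fun_prop) measurable_const
  rw [← hmp.measureReal_preimage hset.nullMeasurableSet]
  set ν : Measure (ι → ℝ × ℝ) := Measure.pi fun _ => γγ with hν
  let S : (ι → ℝ × ℝ) → ℝ := ∑ e, fun w => pairStat c d (w e)
  have hmemE : ∀ e : ι, MemLp (fun w : ι → ℝ × ℝ => pairStat c d (w e)) 2 ν := fun e =>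
    (pairStat_sq c d).1.comp_measurePreserving (measurePreserving_eval (fun _ : ι => γγ) e)
  have hmem : MemLp S 2 ν := memLp_finsetSum' _ fun e _ => hmemE e
  have hmean : ∫ w, S w ∂ν = Fintype.card ι * c := by
    simp only [S, Finset.sum_apply]
    rw [integral_finsetSum _ fun e _ => (hmemE e).integrable one_le_two]
    have : ∀ e : ι, ∫ w, pairStat c d (w e) ∂ν = c := fun e => by
      have h := (pairStat_mean c d).2
      rw [← (measurePreserving_eval (fun _ : ι => γγ) e).map_eq,
        integral_map (measurable_pi_apply e).aemeasurable hmeas.aestronglyMeasurable] at h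
      exact h
    simp [this]
  have hvar : Var[S; ν] ≤ Fintype.card ι * (2 * (c ^ 2 * gaussFour + d ^ 2)) := by
    simp only [S]
    rw [variance_sum_pi (X := fun _ : ι => pairStat c d) fun _ => (pairStat_sq c d).1]
    calc _ ≤ ∑ _ : ι, 2 * (c ^ 2 * gaussFour + d ^ 2) :=
          Finset.sum_le_sum fun _ _ => (pairStat_sq c d).2
      _ = _ := by simp
  have hch := meas_ge_le_variance_div_sq hmem hs
  rw [hmean] at hch
  calc _ ≤ ν.real {w | s ≤ |S w - Fintype.card ι * c|} := by
        refine measureReal_mono fun w hw => ?_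
        have hw' : S w < Fintype.card ι * c - s := by
          simpa [S, MeasurableEquiv.arrowProdEquivProdArrow, Equiv.arrowProdEquivProdArrow] using hw
        simp only [Set.mem_ofPred_eq]
        rw [abs_sub_comm]
        exact le_trans (by linarith) (le_abs_self _)
    _ ≤ Var[S; ν] / s ^ 2 := ENNReal.toReal_le_of_le_ofReal
        (div_nonneg (variance_nonneg _ _) (sq_nonneg _)) hch
    _ ≤ _ := by gcongr

lemma measurable_plant (n : ℕ) (ρ : ℝ) :
    Measurable (fun ω : Equiv.Perm (Fin n) × (Edge n → ℝ) × (Edge n → ℝ) =>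
      ((ω.2.1,
       fun f => ρ * ω.2.1 (edgeMap ω.1⁻¹ f) + Real.sqrt (1 - ρ ^ 2) * ω.2.2 (edgeMap ω.1⁻¹ f)) :
        (Edge n → ℝ) × (Edge n → ℝ))) := by
  refine measurable_from_prod_countable_right fun π => ?_
  dsimp only
  fun_prop

instance (n : ℕ) (ρ : ℝ) : IsProbabilityMeasure (PGauss n ρ) := by
  unfold PGauss
  exact Measure.isProbabilityMeasure_map (measurable_plant n ρ).aemeasurable

/-- Missed-detection probability: the planted permutation alone already has a large score. -/
lemma planted_testSet_compl (n : ℕ) (ρ r s : ℝ) (hs : 0 < s) (hr : 0 ≤ r) (hrρ : r ≤ ρ)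
    (hρ : ρ ≤ 1) :
    (PGauss n ρ).real (testSet n r ((Fintype.card (Edge n) : ℝ) * (r ^ 2 / 2) - s))ᶜ
      ≤ Fintype.card (Edge n) * (2 * r ^ 2 * (gaussFour + 1)) / s ^ 2 := by
  set N : ℝ := (Fintype.card (Edge n) : ℝ) with hN
  set c : ℝ := r * ρ - r ^ 2 / 2 with hc
  set d : ℝ := r * Real.sqrt (1 - ρ ^ 2) with hd
  have hcr : r ^ 2 / 2 ≤ c := by nlinarith
  have hc1 : c ≤ r := by nlinarith [sq_nonneg r]
  have hc2 : c ^ 2 ≤ r ^ 2 := pow_le_pow_left₀ ((by positivity : 0 ≤ r ^ 2 / 2).trans hcr) hc1 2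
  have hd2 : d ^ 2 ≤ r ^ 2 := by
    rw [hd, mul_pow, Real.sq_sqrt (by nlinarith)]
    nlinarith [mul_nonneg (sq_nonneg r) (sq_nonneg ρ)]
  let bad : Set ((Edge n → ℝ) × (Edge n → ℝ)) :=
    {w | ∑ e, pairStat c d (w.1 e, w.2 e) < N * c - s}
  have hbad := pair_sum_tail (ι := Edge n) c d s hs
  rw [PGauss, map_measureReal_apply (measurable_plant n ρ) (measurableSet_testSet _ _ _).compl]
  calc _ ≤ ((permUniform n).prod ((gaussianEdges n).prod (gaussianEdges n))).real
          (Set.univ ×ˢ bad) := by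
        refine measureReal_mono ?_
        rintro ⟨π, W, Z⟩ hω
        simp only [Set.mem_preimage, testSet, Set.mem_compl_iff, Set.mem_iUnion, not_exists,
          Set.mem_ofPred_eq, not_le] at hω
        refine ⟨trivial, ?_⟩
        have h1 := hω π
        have hinv : ∀ e, edgeMap π⁻¹ (edgeMap π e) = e := (edgeEquiv π).symm_apply_apply
        simp only [score, hinv] at h1
        have h2 : ∑ e, pairStat c d (W e, Z e) = ∑ e, (r * W e *
            (ρ * W e + Real.sqrt (1 - ρ ^ 2) * Z e) - (r * W e) ^ 2 / 2) := by
          refine Finset.sum_congr rfl fun e _ => ?_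
          simp only [pairStat, hc, hd]; ring
        have h3 : N * (r ^ 2 / 2) ≤ N * c := by gcongr
        simp only [bad, Set.mem_ofPred_eq]
        rw [h2]
        linarith
    _ = ((gaussianEdges n).prod (gaussianEdges n)).real bad := by
        rw [measureReal_prod_prod]; simp
    _ ≤ _ := hbad
    _ ≤ _ := by
        have hv : 2 * (c ^ 2 * gaussFour + d ^ 2) ≤ 2 * r ^ 2 * (gaussFour + 1) := by
          nlinarith [mul_le_mul_of_nonneg_right hc2 gaussFour_nonneg]
        exact div_le_div_of_nonneg_right (mul_le_mul_of_nonneg_left hv (Nat.cast_nonneg _))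
          (sq_nonneg s)

/-! ### Total variation distance -/

lemma abs_measureReal_sub_le_one {Ω : Type*} [MeasurableSpace Ω] (P Q : Measure Ω)
    [IsProbabilityMeasure P] [IsProbabilityMeasure Q] (S : Set Ω) :
    |P.real S - Q.real S| ≤ 1 := by
  have h1 : P.real S ≤ 1 := measureReal_le_one
  have h2 : Q.real S ≤ 1 := measureReal_le_one
  have h3 : 0 ≤ P.real S := measureReal_nonneg
  have h4 : 0 ≤ Q.real S := measureReal_nonneg
  rw [abs_le]; constructor <;> linarith

lemma TV_le_one {Ω : Type*} [MeasurableSpace Ω] (P Q : Measure Ω) [IsProbabilityMeasure P]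
    [IsProbabilityMeasure Q] : TV P Q ≤ 1 := by
  have : Nonempty {S : Set Ω // MeasurableSet S} := ⟨⟨∅, MeasurableSet.empty⟩⟩
  exact ciSup_le fun S => abs_measureReal_sub_le_one P Q S.1

/-- The total error of any test is at least `1 - TV P Q`. -/
lemma le_TV {Ω : Type*} [MeasurableSpace Ω] (P Q : Measure Ω) [IsProbabilityMeasure P]
    [IsProbabilityMeasure Q] {S : Set Ω} (hS : MeasurableSet S) :
    1 - P.real Sᶜ - Q.real S ≤ TV P Q := by
  have hb : BddAbove (Set.range fun S : {S : Set Ω // MeasurableSet S} =>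
      |(P S.1).toReal - (Q S.1).toReal|) :=
    ⟨1, by rintro _ ⟨S, rfl⟩; exact abs_measureReal_sub_le_one P Q S.1⟩
  refine le_trans ?_ (le_ciSup hb ⟨S, hS⟩)
  refine le_trans ?_ (le_abs_self _)
  change _ ≤ P.real S - Q.real S
  rw [probReal_compl_eq_one_sub hS]
  linarith

/-! ### Asymptotics of the two error probabilities -/

lemma card_edge (n : ℕ) : (Fintype.card (Edge n) : ℝ) = n * (n - 1) / 2 := by
  rw [show Fintype.card (Edge n) = n.choose 2 by
    simpa using Sym2.card_subtype_not_diag (α := Fin n), Nat.cast_choose_two]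

lemma factorial_error_tendsto : Tendsto (fun n : ℕ =>
    (n.factorial : ℝ) * Real.exp (-(n * Real.log n - n / 2))) atTop (nhds 0) := by
  have h1 : Tendsto (fun n : ℕ => Real.sqrt 2 * ((n : ℝ) ^ (1 / 2 : ℝ) *
      Real.exp (-(1 / 2) * (n : ℝ)))) atTop (nhds 0) := by
    have := (tendsto_rpow_mul_exp_neg_mul_atTop_nhds_zero (1 / 2) (1 / 2) (by norm_num)).comp
      (tendsto_natCast_atTop_atTop (R := ℝ))
    simpa using this.const_mul (Real.sqrt 2)
  have h2 := Stirling.tendsto_stirlingSeq_sqrt_pi.mul h1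
  rw [mul_zero] at h2
  refine h2.congr' ?_
  filter_upwards [eventually_gt_atTop 0] with n hn
  have hn' : (0 : ℝ) < n := by exact_mod_cast hn
  have hpow : ((n : ℝ) / Real.exp 1) ^ n = Real.exp (n * Real.log n - n) := by
    rw [← Real.exp_log (show (0 : ℝ) < n / Real.exp 1 by positivity), ← Real.exp_nat_mul,
      Real.log_div hn'.ne' (Real.exp_pos 1).ne', Real.log_exp]
    ring_nf
  rw [Stirling.stirlingSeq, hpow, ← Real.sqrt_eq_rpow, Real.sqrt_mul (by norm_num),
    show -(n * Real.log n - n / 2) = -(n * Real.log n - n) + -(1 / 2) * (n : ℝ) by ring,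
    Real.exp_add, Real.exp_neg (n * Real.log n - n)]
  have : Real.sqrt n ≠ 0 := (Real.sqrt_pos.2 hn').ne'
  field_simp

lemma chebyshev_error_tendsto (C : ℝ) :
    Tendsto (fun n : ℕ => C * (Real.log n / n)) atTop (nhds 0) := by
  have := (Real.isLittleO_log_id_atTop.tendsto_div_nhds_zero).comp
    (tendsto_natCast_atTop_atTop (R := ℝ))
  simpa using this.const_mul C

/-- Theorem 1 of the paper, positive part: in the correlated Gaussian Wigner
detection problem, if `ρ_n² ≥ 4 log n / (n-1)` for all sufficiently large `n`, then
`TV(P_n^{ρ_n}, Q_n) → 1`, i.e. strong detection is possible. -/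
theorem stmt0 (ρ : ℕ → ℝ) (hρ : ∀ n, ρ n ∈ Set.Icc (0 : ℝ) 1)
    (h : ∀ᶠ n : ℕ in atTop, 4 * Real.log n / ((n : ℝ) - 1) ≤ (ρ n) ^ 2) :
    Tendsto (fun n => TV (PGauss n (ρ n)) (QGauss n)) atTop (nhds 1) := by
  have hlow : Tendsto (fun n : ℕ => 1 - 16 * (gaussFour + 1) * (Real.log n / n)
      - (n.factorial : ℝ) * Real.exp (-(n * Real.log n - n / 2))) atTop (nhds 1) := by
    simpa using ((chebyshev_error_tendsto (16 * (gaussFour + 1))).const_sub 1).sub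
      factorial_error_tendsto
  refine tendsto_of_tendsto_of_tendsto_of_le_of_le' hlow tendsto_const_nhds ?_
    (Eventually.of_forall fun n => TV_le_one _ _)
  filter_upwards [h, eventually_ge_atTop 2] with n hn hn2
  have hnR : (2 : ℝ) ≤ n := by exact_mod_cast hn2
  have hlog : 0 ≤ Real.log n := Real.log_nonneg (by linarith)
  set r : ℝ := Real.sqrt (4 * Real.log n / ((n : ℝ) - 1)) with hr
  have hr2 : r ^ 2 = 4 * Real.log n / ((n : ℝ) - 1) :=
    Real.sq_sqrt (div_nonneg (by linarith) (by linarith))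
  have hrρ : r ≤ ρ n := Real.sqrt_le_left (hρ n).1 |>.2 hn
  have hNr : (Fintype.card (Edge n) : ℝ) * r ^ 2 = 2 * (n * Real.log n) := by
    have : (n : ℝ) - 1 ≠ 0 := by linarith
    rw [card_edge, hr2]
    field_simp
    ring
  have hP := planted_testSet_compl n (ρ n) r (n / 2) (by linarith) (Real.sqrt_nonneg _) hrρ (hρ n).2
  have ht : (Fintype.card (Edge n) : ℝ) * (r ^ 2 / 2) - n / 2 = n * Real.log n - n / 2 := by
    linarith
  have hb : (Fintype.card (Edge n) : ℝ) * (2 * r ^ 2 * (gaussFour + 1)) / (n / 2) ^ 2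
      = 16 * (gaussFour + 1) * (Real.log n / n) := by
    rw [show (Fintype.card (Edge n) : ℝ) * (2 * r ^ 2 * (gaussFour + 1))
      = 2 * (gaussFour + 1) * (Fintype.card (Edge n) * r ^ 2) by ring, hNr]
    field_simp
    ring
  rw [ht, hb] at hP
  have hQ := null_testSet n r (n * Real.log n - n / 2)
  have hTV := le_TV (PGauss n (ρ n)) (QGauss n)
    (measurableSet_testSet n r (n * Real.log n - n / 2))
  linarith

end
end

section
/- In the correlated Gaussian Wigner detection problem, for every fixed ε > 0, if the sequence of correlation parameters ρ_n ∈ [0,1] satisfies ρ_n² ≤ (4−ε)·log n/n for all n, then the total variation distance TV(P_n^{ρ_n}, Q_n) → 0 as n → ∞; in particular even weak detection is impossible. -/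
/-!
The proof is a truncated second-moment argument. Given the permutation `π`, the likelihood ratio of
the planted model against the null model is a product `lik r π` over the edges of kernels `ell r`
(`PGauss_apply`), so the likelihood ratio of `P_n^ρ` is the average of `lik r π` over `π`. Its second
moment is too large, because of pairs of permutations that agree on most vertices, so `lik r π` is
replaced by `tlik r T π`, its restriction to the event that the part of the likelihood ratio carried
by the edges inside `S` is at most `T |S|` for every vertex set `S` with `|S| ≥ n / 2`. If the
truncation costs at most `β` in `L¹` and leaves a second moment at most `1 + γ`, then the total
variation distance is at most `β + √(γ + 2β)` (`abs_sub_le_of_truncation`, `TV_le`).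

*Cost of the truncation.* Under the planted model the logarithm of the likelihood ratio inside `S`
concentrates around `ρ² |S|² / 4`. With the threshold `thr η τ k = exp ((1 + η) τ k² / 4)`, an
exponential Markov inequality and a union bound over at most `2 ^ n` sets give `β ≤ exp (-n)` for
large `n`, as `τ n² ≍ n log n` (`lintegral_lik_sub_tlik_le`, `failBound_le`).

*Second moment.* For two permutations with quotient `σ`, the second moment is a Gaussian integral of
kernels `ell (ρ²)` along the cycles of the permutation of the edges induced by `σ`, equal to
`det (1 - ρ² M)⁻¹` with `M` the permutation matrix (`lintegral_prod_ell`, `lintegral_lik_mul`). Since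
`ρ²` is of order `log n / n`, only edges of period one and two matter (`inv_det_le`): the fixed edges
are those inside the fixed-point set of `σ` and the 2-cycles of `σ`. If `σ` has `k ≥ n / 2` fixed
points, one copy of the likelihood ratio inside the fixed-point set is replaced by its threshold
(`lintegral_tlik_mul_le`), which halves the exponent `τ k² / 2`. Up to factors `1 + o(1)` and
the contribution of the 2-cycles, a pair with `k` fixed points thus contributes at most
`exp ((1 - ε / 8) k log n)`, and `exp (o(k))` if `k < n ^ (1 - ε / 16)`.

The numbers of fixed points and 2-cycles of a uniform permutation are dominated by independent
Poisson variables, in the sense of the generating functions in `sum_fix_twoCyc_le` and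
`sum_twoCyc_fix_eq_le`. Hence permutations with few fixed points contribute `1 + o(1)`, and those with
`k ≥ n ^ (1 - ε / 16)` fixed points contribute `o(1)`, because `1 / k!` beats
`exp ((1 - ε / 8) k log n)` (`pairSum_le`).
-/

open MeasureTheory ProbabilityTheory Filter

noncomputable section

/-! ### Determinants of partial permutation matrices -/

/-- The permutation matrix of `σ` with the rows outside `V` replaced by zero: the entry `(i, σ i)` is
`1` for `i ∈ V`, and all other entries vanish. -/
def subPerm {ι : Type*} [DecidableEq ι] (σ : Equiv.Perm ι) (V : Finset ι) : Matrix ι ι ℝ :=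
  Matrix.of fun i j => if i ∈ V ∧ σ i = j then 1 else 0

section det
variable {ι : Type*} [Fintype ι] [DecidableEq ι] (σ : Equiv.Perm ι) (V : Finset ι)

lemma subPerm_mul_apply (X : Matrix ι ι ℝ) (i j : ι) :
    (subPerm σ V * X) i j = if i ∈ V then X (σ i) j else 0 := by
  simp only [subPerm, Matrix.mul_apply, Matrix.of_apply]
  by_cases h : i ∈ V <;> simp [h]

lemma subPerm_mulVec (x : ι → ℝ) (i : ι) :
    (subPerm σ V).mulVec x i = if i ∈ V then x (σ i) else 0 := by
  simp only [subPerm, Matrix.mulVec, dotProduct, Matrix.of_apply]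
  by_cases h : i ∈ V <;> simp [h]

lemma trace_subPerm : (subPerm σ V).trace = ((V.filter fun i => σ i = i).card : ℝ) := by
  simp only [Matrix.trace, Matrix.diag_apply, subPerm, Matrix.of_apply]
  rw [Finset.sum_boole]
  congr 2; ext i; simp

lemma trace_subPerm_sq_le : (subPerm σ V * subPerm σ V).trace ≤
    ((V.filter fun i => σ (σ i) = i).card : ℝ) := by
  simp only [Matrix.trace, Matrix.diag_apply, subPerm_mul_apply]
  rw [Finset.card_filter, Nat.cast_sum, ← Finset.sum_filter_add_sum_filter_not Finset.univ (· ∈ V)]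
  have h2 : ∑ x with x ∉ V, (if x ∈ V then subPerm σ V (σ x) x else 0) = 0 :=
    Finset.sum_eq_zero fun x hx => by simp at hx; simp [hx]
  rw [h2, add_zero, Finset.filter_mem_eq_inter, Finset.univ_inter]
  refine Finset.sum_le_sum fun x hx => ?_
  simp only [hx, if_true, subPerm, Matrix.of_apply, Nat.cast_ite, Nat.cast_one, Nat.cast_zero]
  split_ifs <;> grind

lemma det_one_sub_ne_zero {s : ℝ} (h0 : 0 ≤ s) (h1 : s < 1) :
    (1 - s • subPerm σ V).det ≠ 0 := by
  intro h
  obtain ⟨v, hv, hv0⟩ := Matrix.exists_mulVec_eq_zero_iff.mpr h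
  obtain ⟨j, hj⟩ : ∃ j, v j ≠ 0 := by
    by_contra! hc; exact hv (funext hc)
  have : Nonempty ι := ⟨j⟩
  obtain ⟨i, hi⟩ := Finite.exists_max fun i => |v i|
  have hpos : 0 < |v i| := lt_of_lt_of_le (abs_pos.mpr hj) (hi j)
  have h2 := congrFun hv0 i
  rw [Matrix.sub_mulVec, Matrix.one_mulVec, Matrix.smul_mulVec, Pi.sub_apply, Pi.smul_apply,
    subPerm_mulVec, Pi.zero_apply, smul_eq_mul] at h2
  split_ifs at h2 with hV
  · have h3 : |v i| = s * |v (σ i)| := by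
      rw [sub_eq_zero.mp h2, abs_mul, abs_of_nonneg h0]
    have := hi (σ i)
    nlinarith
  · simp at h2; simp [h2] at hpos

/-- Resolvent bound: the trace of `(1 - sM)⁻¹ M` is expanded to second order in `s`. -/
lemma trace_resolvent_le {s : ℝ} (h0 : 0 ≤ s) (h1 : s ≤ 1 / 2) :
    ((1 - s • subPerm σ V)⁻¹ * subPerm σ V).trace ≤
      ((V.filter fun i => σ i = i).card : ℝ) + s * ((V.filter fun i => σ (σ i) = i).card : ℝ)
        + s ^ 2 * (2 * (Fintype.card ι : ℝ)) := by
  set M := subPerm σ V with hM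
  set R := (1 - s • M)⁻¹ * M with hR
  have hdet : IsUnit (1 - s • M).det :=
    isUnit_iff_ne_zero.mpr (det_one_sub_ne_zero σ V h0 (by linarith))
  have hrec : R = M + s • (M * R) := by
    have h := Matrix.mul_nonsing_inv (1 - s • M) hdet
    have : (1 - s • M) * R = M := by rw [hR, ← Matrix.mul_assoc, h, Matrix.one_mul]
    rw [Matrix.sub_mul, Matrix.one_mul, Matrix.smul_mul] at this
    exact (sub_eq_iff_eq_add.mp this)
  have hbd : ∀ i j, |R i j| ≤ 2 := by
    intro i j
    have : Nonempty ι := ⟨i⟩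
    obtain ⟨k, hk⟩ := Finite.exists_max fun i => |R i j|
    refine (hk i).trans ?_
    have h2 : R k j = M k j + s * (if k ∈ V then R (σ k) j else 0) := by
      conv_lhs => rw [hrec]
      rw [Matrix.add_apply, Matrix.smul_apply, hM, subPerm_mul_apply, smul_eq_mul]
    have h3 : |M k j| ≤ 1 := by
      simp only [hM, subPerm, Matrix.of_apply]; split_ifs <;> simp
    have h4 : |(if k ∈ V then R (σ k) j else 0)| ≤ |R k j| := by
      split_ifs
      · exact hk _
      · simp
    have h5 : |R k j| ≤ 1 + s * |R k j| := by
      calc |R k j| = _ := by rw [h2]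
        _ ≤ |M k j| + |s * (if k ∈ V then R (σ k) j else 0)| := abs_add_le _ _
        _ ≤ 1 + s * |R k j| := by rw [abs_mul, abs_of_nonneg h0]; gcongr
    show |R k j| ≤ 2
    nlinarith [abs_nonneg (R k j)]
  have hexp : R = M + s • (M * M) + s ^ 2 • (M * (M * R)) := by
    conv_lhs => rw [hrec, hrec]
    simp only [Matrix.mul_add, smul_add, Matrix.mul_smul, smul_smul]
    rw [pow_two]; abel
  have htr : (M * (M * R)).trace ≤ 2 * (Fintype.card ι : ℝ) := by
    simp only [Matrix.trace, Matrix.diag_apply]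
    have : ∀ i ∈ Finset.univ, (M * (M * R)) i i ≤ 2 := by
      intro i _
      rw [hM, subPerm_mul_apply, subPerm_mul_apply]
      split_ifs
      · exact (le_abs_self _).trans (hbd _ _)
      · norm_num
      · norm_num
    refine (Finset.sum_le_card_nsmul _ _ _ this).trans ?_
    simp [mul_comm]
  rw [hexp, Matrix.trace_add, Matrix.trace_add, Matrix.trace_smul, Matrix.trace_smul,
    smul_eq_mul, smul_eq_mul]
  have e1 : M.trace = _ := trace_subPerm σ V
  have e2 : (M * M).trace ≤ _ := trace_subPerm_sq_le σ V
  rw [e1]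
  gcongr

lemma hasDerivAt_det_one_sub {s : ℝ} (h0 : 0 ≤ s) (h1 : s < 1) :
    HasDerivAt (fun s : ℝ => (1 - s • subPerm σ V).det)
      (-((1 - s • subPerm σ V).det * ((1 - s • subPerm σ V)⁻¹ * subPerm σ V).trace)) s := by
  set M := subPerm σ V with hM
  set R := (1 - s • M)⁻¹ * M with hR
  have hdet : IsUnit (1 - s • M).det :=
    isUnit_iff_ne_zero.mpr (det_one_sub_ne_zero σ V h0 h1)
  have hfac : ∀ r : ℝ, (1 - r • M).det = (1 - s • M).det * (1 + (r - s) • (-R)).det := by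
    intro r
    rw [← Matrix.det_mul]
    congr 1
    have : (1 - s • M) * R = M := by
      rw [hR, ← Matrix.mul_assoc, Matrix.mul_nonsing_inv _ hdet, Matrix.one_mul]
    rw [Matrix.mul_add, Matrix.mul_one, Matrix.mul_smul, Matrix.mul_neg, this, smul_neg, sub_smul]
    abel
  have hpoly : HasDerivAt (fun x : ℝ => (1 + x • (-R)).det) (-R.trace) 0 := by
    rw [funext fun x : ℝ => Matrix.det_one_add_smul x (-R)]
    set p := (Matrix.det (1 + (Polynomial.X : Polynomial ℝ) • (-R).map ⇑Polynomial.C)).divX.divX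
    have hp := p.hasDerivAt 0
    have := ((hasDerivAt_id (0:ℝ)).const_mul (-R).trace).const_add 1 |>.add
      (hp.mul ((hasDerivAt_id (0:ℝ)).pow 2))
    convert! this using 1
    simp [Matrix.trace_neg]
  have h2 : HasDerivAt (fun r : ℝ => (1 + (r - s) • (-R)).det) (-R.trace) s := by
    have := HasDerivAt.comp_sub_const (f := fun x : ℝ => (1 + x • (-R)).det) s s
      (by simpa using hpoly)
    exact this
  have h3 := h2.const_mul (1 - s • M).det
  simp only [← hfac] at h3
  convert! h3 using 1
  ring

lemma det_one_sub_pos {s : ℝ} (h0 : 0 ≤ s) (h1 : s < 1) : 0 < (1 - s • subPerm σ V).det := by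
  by_contra! hc
  have hcont : ContinuousOn (fun s : ℝ => (1 - s • subPerm σ V).det) (Set.Icc 0 s) := fun x hx =>
    (hasDerivAt_det_one_sub σ V hx.1 (hx.2.trans_lt h1)).continuousAt.continuousWithinAt
  have := intermediate_value_Icc' h0 hcont
  obtain ⟨x, hx, hx0⟩ := this ⟨hc, by simp⟩
  exact det_one_sub_ne_zero σ V hx.1 (hx.2.trans_lt h1) hx0

/-- A second-order bound for `-log det (1 - tM)`, whose `t`-derivative is the trace in
`trace_resolvent_le`; equivalently, `det (1 - tM) * exp (q t)` is nondecreasing for a suitable cubic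
`q` with `q 0 = 0`. -/
lemma inv_det_le {t : ℝ} (h0 : 0 ≤ t) (h1 : t ≤ 1 / 2) :
    ((1 - t • subPerm σ V).det)⁻¹ ≤
      Real.exp (t * ((V.filter fun i => σ i = i).card : ℝ)
        + t ^ 2 / 2 * ((V.filter fun i => σ (σ i) = i).card : ℝ)
        + t ^ 3 * (Fintype.card ι : ℝ)) := by
  set a := ((V.filter fun i => σ i = i).card : ℝ)
  set b := ((V.filter fun i => σ (σ i) = i).card : ℝ)
  set m := (Fintype.card ι : ℝ)
  have hm : 0 ≤ m := Nat.cast_nonneg _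
  set D : ℝ → ℝ := fun s => (1 - s • subPerm σ V).det with hD
  set q : ℝ → ℝ := fun s => s * a + s ^ 2 / 2 * b + s ^ 3 * (2 / 3 * m) with hq
  have hq' : ∀ s, HasDerivAt q (a + s * b + s ^ 2 * (2 * m)) s := by
    intro s
    have := (((hasDerivAt_id s).mul_const a).add
      ((((hasDerivAt_id s).pow 2).div_const 2).mul_const b)).add
      (((hasDerivAt_id s).pow 3).mul_const (2 / 3 * m))
    convert! this using 1
    simp; ring
  have hg : ∀ s, 0 ≤ s → s ≤ 1 / 2 → HasDerivAt (fun s => D s * Real.exp (q s))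
      (-(D s * ((1 - s • subPerm σ V)⁻¹ * subPerm σ V).trace) * Real.exp (q s) +
        D s * (Real.exp (q s) * (a + s * b + s ^ 2 * (2 * m)))) s := fun s hs0 hs1 =>
    (hasDerivAt_det_one_sub σ V hs0 (by linarith)).mul (hq' s).exp
  have hmono : MonotoneOn (fun s => D s * Real.exp (q s)) (Set.Icc 0 (1 / 2)) := by
    refine monotoneOn_of_deriv_nonneg (convex_Icc _ _) ?_ ?_ ?_
    · exact fun x hx => (hg x hx.1 hx.2).continuousAt.continuousWithinAt
    · intro x hx
      rw [interior_Icc] at hx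
      exact (hg x hx.1.le hx.2.le).differentiableAt.differentiableWithinAt
    · intro x hx
      rw [interior_Icc] at hx
      rw [(hg x hx.1.le hx.2.le).deriv]
      have h2 := trace_resolvent_le σ V hx.1.le hx.2.le
      have h3 := det_one_sub_pos σ V hx.1.le (by linarith [hx.2] : x < 1)
      have h4 := Real.exp_pos (q x)
      have : 0 ≤ D x * Real.exp (q x) *
          (a + x * b + x ^ 2 * (2 * m) - ((1 - x • subPerm σ V)⁻¹ * subPerm σ V).trace) :=
        mul_nonneg (mul_pos h3 h4).le (by linarith)
      linarith
  have h5 := hmono (⟨le_refl _, by norm_num⟩ : (0:ℝ) ∈ Set.Icc (0:ℝ) (1/2)) ⟨h0, h1⟩ h0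
  have h6 := det_one_sub_pos σ V h0 (by linarith : t < 1)
  have h7 : 1 ≤ D t * Real.exp (q t) := by simpa [hD, hq] using h5
  rw [inv_le_iff_one_le_mul₀ h6]
  refine h7.trans ?_
  rw [mul_comm]
  refine mul_le_mul_of_nonneg_right (Real.exp_le_exp.mpr ?_) h6.le
  simp only [hq]
  have : 0 ≤ t ^ 3 * m := by positivity
  linarith

end det

/-! ### Gaussian integrals of the correlation kernel -/

lemma lintegral_prod_pi {ι : Type*} [Fintype ι] {μ : ι → Measure ℝ} [∀ i, SigmaFinite (μ i)]
    {f : ι → ℝ → ENNReal} (hf : ∀ i, Measurable (f i)) :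
    ∫⁻ x, ∏ i, f i (x i) ∂(Measure.pi μ) = ∏ i, ∫⁻ x, f i x ∂(μ i) := by
  have key : ∀ (n : ℕ) (μ : Fin n → Measure ℝ) [∀ i, SigmaFinite (μ i)]
      (f : Fin n → ℝ → ENNReal), (∀ i, Measurable (f i)) →
      ∫⁻ x, ∏ i, f i (x i) ∂(Measure.pi μ) = ∏ i, ∫⁻ x, f i x ∂(μ i) := by
    intro n
    induction n with
    | zero => intro μ _ f _; simp
    | succ n ih =>
      intro μ _ f hf
      rw [← ((measurePreserving_piFinSuccAbove μ 0).symm).lintegral_comp_emb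
        (MeasurableEquiv.measurableEmbedding _), Fin.prod_univ_succ, ← ih _ _ (fun i => hf i.succ),
        ← lintegral_prod_mul (hf 0).aemeasurable]
      · refine lintegral_congr fun x => ?_
        rw [Fin.prod_univ_succ]
        rfl
      · exact (Finset.measurable_prod _ fun i _ =>
          (hf i.succ).comp (measurable_pi_apply i)).aemeasurable
  let e := (Fintype.equivFin ι).symm
  rw [← (measurePreserving_piCongrLeft μ e).lintegral_comp_emb
    (MeasurableEquiv.measurableEmbedding _), ← e.prod_comp, ← key _ _ _ (fun i => hf (e i))]
  refine lintegral_congr fun x => ?_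
  rw [← e.prod_comp]
  refine Finset.prod_congr rfl fun i _ => ?_
  rw [MeasurableEquiv.coe_piCongrLeft]
  exact congrArg (f (e i)) (Equiv.piCongrLeft_apply_apply (fun _ => ℝ) e x i)

lemma pi_withDensity {ι : Type*} [Fintype ι] {μ : ι → Measure ℝ} [∀ i, SigmaFinite (μ i)]
    {f : ι → ℝ → ENNReal} (hf : ∀ i, Measurable (f i))
    [∀ i, SigmaFinite ((μ i).withDensity (f i))] :
    Measure.pi (fun i => (μ i).withDensity (f i)) =
      (Measure.pi μ).withDensity (fun x => ∏ i, f i (x i)) := by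
  refine (Measure.pi_eq fun s hs => ?_)
  rw [withDensity_apply _ (MeasurableSet.univ_pi hs), ← lintegral_indicator (MeasurableSet.univ_pi hs)]
  have : ∀ x : ι → ℝ, (Set.univ.pi s).indicator (fun x => ∏ i, f i (x i)) x =
      ∏ i, (s i).indicator (f i) (x i) := by
    intro x
    by_cases hx : x ∈ Set.univ.pi s
    · rw [Set.indicator_of_mem hx]
      exact Finset.prod_congr rfl fun i _ => (Set.indicator_of_mem (hx i trivial) _).symm
    · rw [Set.indicator_of_notMem hx]
      simp only [Set.mem_pi, Set.mem_univ, true_imp_iff, not_forall] at hx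
      obtain ⟨i, hi⟩ := hx
      exact (Finset.prod_eq_zero (Finset.mem_univ i) (Set.indicator_of_notMem hi _)).symm
  rw [lintegral_congr this, lintegral_prod_pi fun i => (hf i).indicator (hs i)]
  refine Finset.prod_congr rfl fun i _ => ?_
  rw [withDensity_apply _ (hs i), lintegral_indicator (hs i)]

lemma lintegral_exp_quadratic (α : ℝ) {β : ℝ} (hβ : 0 < 1 + β) :
    ∫⁻ x, ENNReal.ofReal (Real.exp (α * x - β * x ^ 2 / 2)) ∂(gaussianReal 0 1) =
      ENNReal.ofReal ((√(1 + β))⁻¹ * Real.exp (α ^ 2 / (2 * (1 + β)))) := by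
  rw [gaussianReal_of_var_ne_zero 0 one_ne_zero,
    lintegral_withDensity_eq_lintegral_mul _ (by fun_prop) (by fun_prop)]
  obtain ⟨v, hv⟩ : ∃ v : NNReal, (v : ℝ) = (1 + β)⁻¹ := ⟨⟨(1 + β)⁻¹, by positivity⟩, rfl⟩
  have hv0 : v ≠ 0 := by
    rintro rfl
    have : (0 : ℝ) < (1 + β)⁻¹ := by positivity
    rw [← hv] at this
    simp at this
  have hs : 0 < √(1 + β) := Real.sqrt_pos.mpr hβ
  have h2p : 0 < √(2 * Real.pi) := by positivity
  have key : ∀ x : ℝ, (gaussianPDF 0 1 * fun x => ENNReal.ofReal (Real.exp (α * x - β * x ^ 2 / 2))) x =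
      ENNReal.ofReal ((√(1 + β))⁻¹ * Real.exp (α ^ 2 / (2 * (1 + β)))) *
        ENNReal.ofReal (gaussianPDFReal (α / (1 + β)) v x) := by
    intro x
    rw [Pi.mul_apply, gaussianPDF, ← ENNReal.ofReal_mul (gaussianPDFReal_nonneg _ _ _),
      ← ENNReal.ofReal_mul (by positivity)]
    congr 1
    simp only [gaussianPDFReal, hv, NNReal.coe_one, mul_one, sub_zero]
    rw [Real.sqrt_mul (x := 2 * Real.pi) (by positivity), Real.sqrt_inv]
    have : Real.exp (-x ^ 2 / 2) * Real.exp (α * x - β * x ^ 2 / 2) =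
        Real.exp (α ^ 2 / (2 * (1 + β))) *
          Real.exp (-(x - α / (1 + β)) ^ 2 / (2 * (1 + β)⁻¹)) := by
      rw [← Real.exp_add, ← Real.exp_add]
      congr 1
      have := hβ.ne'
      field_simp
      ring
    rw [mul_assoc, this]
    field_simp
  rw [lintegral_congr key, lintegral_const_mul _ (by fun_prop),
    lintegral_gaussianPDFReal_eq_one _ hv0, mul_one]

/-- The likelihood ratio of a standard bivariate Gaussian pair of correlation `r` with respect to
an independent pair. -/
def ell (r a b : ℝ) : ℝ :=
  (√(1 - r ^ 2))⁻¹ * Real.exp ((2 * r * a * b - r ^ 2 * (a ^ 2 + b ^ 2)) / (2 * (1 - r ^ 2)))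

@[fun_prop]
lemma measurable_ell {X : Type*} [MeasurableSpace X] {r : ℝ} {f g : X → ℝ} (hf : Measurable f)
    (hg : Measurable g) : Measurable fun x => ell r (f x) (g x) := by
  unfold ell; fun_prop

lemma ell_pos {r : ℝ} (hr : r ^ 2 < 1) (a b : ℝ) : 0 < ell r a b := by
  have : 0 < √(1 - r ^ 2) := Real.sqrt_pos.mpr (by linarith)
  unfold ell; positivity

lemma lintegral_ell {r : ℝ} (hr : r ^ 2 < 1) (a : ℝ) :
    ∫⁻ b, ENNReal.ofReal (ell r a b) ∂(gaussianReal 0 1) = 1 := by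
  have h1 : 0 < 1 - r ^ 2 := by linarith
  have h : ∀ b, ENNReal.ofReal (ell r a b) =
      ENNReal.ofReal ((√(1 - r ^ 2))⁻¹ * Real.exp (-(r ^ 2 * a ^ 2) / (2 * (1 - r ^ 2)))) *
      ENNReal.ofReal (Real.exp ((r * a / (1 - r ^ 2)) * b - (r ^ 2 / (1 - r ^ 2)) * b ^ 2 / 2)) := by
    intro b
    rw [← ENNReal.ofReal_mul (by positivity), ell, mul_assoc _ (Real.exp _), ← Real.exp_add]
    congr 3
    field_simp
    ring
  have h2 : 1 + r ^ 2 / (1 - r ^ 2) = (1 - r ^ 2)⁻¹ := by field_simp; ring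
  rw [lintegral_congr h, lintegral_const_mul _ (by fun_prop),
    lintegral_exp_quadratic _ (by rw [h2]; positivity), h2, ← ENNReal.ofReal_mul (by positivity),
    Real.sqrt_inv, inv_inv, ← ENNReal.ofReal_one]
  congr 1
  have h3 : 0 < √(1 - r ^ 2) := Real.sqrt_pos.mpr h1
  rw [mul_mul_mul_comm, ← Real.exp_add, inv_mul_cancel₀ h3.ne', one_mul, Real.exp_eq_one_iff]
  field_simp
  ring

lemma lintegral_ell_mul_ell {r : ℝ} (hr : r ^ 2 < 1) (a a' : ℝ) :
    ∫⁻ b, ENNReal.ofReal (ell r a b * ell r a' b) ∂(gaussianReal 0 1) =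
      ENNReal.ofReal (ell (r ^ 2) a a') := by
  have h1 : 0 < 1 - r ^ 2 := by linarith
  have h1' : 0 < 1 + r ^ 2 := by positivity
  have hs : 0 < √(1 - r ^ 2) := Real.sqrt_pos.mpr h1
  have hs' : 0 < √(1 + r ^ 2) := Real.sqrt_pos.mpr h1'
  have h : ∀ b, ENNReal.ofReal (ell r a b * ell r a' b) =
      ENNReal.ofReal ((1 - r ^ 2)⁻¹ *
        Real.exp (-(r ^ 2 * (a ^ 2 + a' ^ 2)) / (2 * (1 - r ^ 2)))) *
      ENNReal.ofReal (Real.exp ((r * (a + a') / (1 - r ^ 2)) * b -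
        (2 * r ^ 2 / (1 - r ^ 2)) * b ^ 2 / 2)) := by
    intro b
    rw [← ENNReal.ofReal_mul (by positivity), ell, ell, mul_assoc _ (Real.exp _) (Real.exp _),
      ← Real.exp_add, mul_mul_mul_comm, ← Real.exp_add, ← mul_inv, Real.mul_self_sqrt h1.le]
    congr 3
    field_simp
    ring
  have h2 : 1 + 2 * r ^ 2 / (1 - r ^ 2) = (1 + r ^ 2) / (1 - r ^ 2) := by field_simp; ring
  have h4 : 1 - (r ^ 2) ^ 2 = (1 - r ^ 2) * (1 + r ^ 2) := by ring
  rw [lintegral_congr h, lintegral_const_mul _ (by fun_prop),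
    lintegral_exp_quadratic _ (by rw [h2]; positivity), h2, ← ENNReal.ofReal_mul (by positivity)]
  congr 1
  rw [mul_mul_mul_comm, ← Real.exp_add, ell, h4, Real.sqrt_div h1'.le, Real.sqrt_mul h1.le]
  congr 1
  · have := Real.mul_self_sqrt h1.le
    field_simp
    linarith
  · congr 1
    field_simp
    ring

lemma lintegral_ell_rpow {r l : ℝ} (hr : r ^ 2 < 1) (hl0 : 0 ≤ l) (hl1 : l ≤ 1) :
    ∫⁻ a, ∫⁻ b, ENNReal.ofReal (ell r a b ^ (1 + l)) ∂(gaussianReal 0 1) ∂(gaussianReal 0 1) =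
      ENNReal.ofReal ((√(1 - r ^ 2))⁻¹ ^ l * (√(1 - l ^ 2 * r ^ 2))⁻¹) := by
  have h1 : 0 < 1 - r ^ 2 := by linarith
  have hs : 0 < √(1 - r ^ 2) := Real.sqrt_pos.mpr h1
  have hl2 : l ^ 2 ≤ 1 := by nlinarith
  have h1' : 0 < 1 - l ^ 2 * r ^ 2 := by nlinarith [sq_nonneg r]
  have h1'' : 0 < 1 + l * r ^ 2 := by positivity
  have h : ∀ a b, ENNReal.ofReal (ell r a b ^ (1 + l)) =
      ENNReal.ofReal ((√(1 - r ^ 2))⁻¹ ^ (1 + l) *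
        Real.exp (-((1 + l) * (r ^ 2 * a ^ 2)) / (2 * (1 - r ^ 2)))) *
      ENNReal.ofReal (Real.exp (((1 + l) * r * a / (1 - r ^ 2)) * b -
        ((1 + l) * r ^ 2 / (1 - r ^ 2)) * b ^ 2 / 2)) := by
    intro a b
    rw [← ENNReal.ofReal_mul (by positivity), ell, Real.mul_rpow (by positivity) (by positivity),
      ← Real.exp_mul, mul_assoc _ (Real.exp _), ← Real.exp_add]
    congr 3
    field_simp
    ring
  have h2 : 1 + (1 + l) * r ^ 2 / (1 - r ^ 2) = (1 + l * r ^ 2) / (1 - r ^ 2) := by field_simp; ring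
  have hin : ∀ a, ∫⁻ b, ENNReal.ofReal (ell r a b ^ (1 + l)) ∂(gaussianReal 0 1) =
      ENNReal.ofReal ((√(1 - r ^ 2))⁻¹ ^ (1 + l) * (√((1 + l * r ^ 2) / (1 - r ^ 2)))⁻¹) *
      ENNReal.ofReal (Real.exp (0 * a - -(l * (1 + l) * r ^ 2 / (1 + l * r ^ 2)) * a ^ 2 / 2)) := by
    intro a
    rw [lintegral_congr (h a), lintegral_const_mul _ (by fun_prop),
      lintegral_exp_quadratic _ (by rw [h2]; positivity), h2, ← ENNReal.ofReal_mul (by positivity),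
      ← ENNReal.ofReal_mul (by positivity)]
    congr 1
    rw [mul_mul_mul_comm, ← Real.exp_add]
    congr 2
    field_simp
    ring
  have h3 : 1 + -(l * (1 + l) * r ^ 2 / (1 + l * r ^ 2)) =
      (1 - l ^ 2 * r ^ 2) / (1 + l * r ^ 2) := by field_simp; ring
  have hs' : 0 < √(1 + l * r ^ 2) := Real.sqrt_pos.mpr h1''
  have hs'' : 0 < √(1 - l ^ 2 * r ^ 2) := Real.sqrt_pos.mpr h1'
  rw [lintegral_congr hin, lintegral_const_mul _ (by fun_prop),
    lintegral_exp_quadratic _ (by rw [h3]; positivity), h3, ← ENNReal.ofReal_mul (by positivity)]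
  congr 1
  rw [Real.sqrt_div h1''.le, Real.sqrt_div h1'.le, Real.rpow_add (by positivity), Real.rpow_one]
  simp
  field_simp

/-- Mehler trace formula: along the orbits of `σ` the Gaussian integral of a product of kernels
`ell t` is the inverse of a Fredholm determinant. -/
lemma lintegral_prod_ell {ι : Type*} [Fintype ι] [DecidableEq ι] (σ : Equiv.Perm ι) (V : Finset ι)
    (hV : ∀ i, σ i ∈ V ↔ i ∈ V) {t : ℝ} (h0 : 0 ≤ t) (h1 : t < 1) :
    ∫⁻ x, ENNReal.ofReal (∏ i ∈ V, ell t (x i) (x (σ i)))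
        ∂(Measure.pi fun _ : ι => gaussianReal 0 1) =
      ENNReal.ofReal ((1 - t • subPerm σ V).det)⁻¹ := by
  have hq : 0 < 1 - t ^ 2 := by nlinarith
  have hsq : 0 < √(1 - t ^ 2) := Real.sqrt_pos.mpr hq
  have hD := det_one_sub_pos σ V h0 h1
  have h : Measure.pi (fun _ : ι => gaussianReal 0 1) =
      (volume : Measure (ι → ℝ)).withDensity (fun x => ∏ i, gaussianPDF 0 1 (x i)) := by
    have hg : gaussianReal 0 1 = (volume : Measure ℝ).withDensity (gaussianPDF 0 1) :=
      gaussianReal_of_var_ne_zero 0 one_ne_zero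
    have : SigmaFinite ((volume : Measure ℝ).withDensity (gaussianPDF 0 1)) := by
      rw [← hg]; infer_instance
    rw [hg, pi_withDensity fun _ => by fun_prop]
    rfl
  set c : ι → ℝ := fun i => if i ∈ V then (√(1 - t ^ 2))⁻¹ else 1 with hc
  have hcpos : ∀ i, 0 < c i := fun i => by simp only [hc]; split_ifs <;> positivity
  set N : Matrix ι ι ℝ := Matrix.diagonal c * (1 - t • subPerm σ V) with hN
  have hNdet : N.det = (∏ i, c i) * (1 - t • subPerm σ V).det := by
    rw [hN, Matrix.det_mul, Matrix.det_diagonal]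
  have hcprod : 0 < ∏ i, c i := Finset.prod_pos fun i _ => hcpos i
  have hNpos : 0 < N.det := by rw [hNdet]; positivity
  have hmeas : Measurable (fun x : ι → ℝ => ∏ i, gaussianPDF 0 1 (x i)) :=
    Finset.measurable_prod _ fun i _ => (measurable_gaussianPDF 0 1).comp (measurable_pi_apply i)
  -- The density of the Gaussian vector times the kernels is the Gaussian density pulled back by `N`.
  have key : ∀ x : ι → ℝ, ((fun x : ι → ℝ => ∏ i, gaussianPDF 0 1 (x i)) * fun x : ι → ℝ =>
        ENNReal.ofReal (∏ i ∈ V, ell t (x i) (x (σ i)))) x =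
      ENNReal.ofReal (∏ i, c i) *
        (fun x : ι → ℝ => ∏ i, gaussianPDF 0 1 (x i)) (Matrix.toLin' N x) := by
    intro x
    simp only [Pi.mul_apply, gaussianPDF]
    rw [← ENNReal.ofReal_prod_of_nonneg fun i _ => gaussianPDFReal_nonneg _ _ _,
      ← ENNReal.ofReal_prod_of_nonneg fun i _ => gaussianPDFReal_nonneg _ _ _,
      ← ENNReal.ofReal_mul (Finset.prod_nonneg fun i _ => gaussianPDFReal_nonneg _ _ _),
      ← ENNReal.ofReal_mul hcprod.le]
    congr 1
    have hNx : ∀ i, Matrix.toLin' N x i =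
        if i ∈ V then (√(1 - t ^ 2))⁻¹ * (x i - t * x (σ i)) else x i := by
      intro i
      rw [Matrix.toLin'_apply, hN, ← Matrix.mulVec_mulVec, Matrix.mulVec_diagonal,
        Matrix.sub_mulVec, Matrix.one_mulVec, Matrix.smul_mulVec, Pi.sub_apply, Pi.smul_apply,
        subPerm_mulVec, smul_eq_mul]
      simp only [hc]
      split_ifs <;> simp
    simp only [gaussianPDFReal, NNReal.coe_one, mul_one, sub_zero, Finset.prod_mul_distrib, ell,
      Finset.prod_const]
    rw [← Real.exp_sum, ← Real.exp_sum, ← Real.exp_sum]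
    have hce : ∏ i, c i = (√(1 - t ^ 2))⁻¹ ^ V.card := by
      simp only [hc, Finset.prod_ite_mem, Finset.univ_inter, Finset.prod_const]
    rw [hce]
    have hexp : ∑ i, -x i ^ 2 / 2 + ∑ i ∈ V, (2 * t * x i * x (σ i) - t ^ 2 *
        (x i ^ 2 + x (σ i) ^ 2)) / (2 * (1 - t ^ 2)) =
        ∑ i, -(Matrix.toLin' N x i) ^ 2 / 2 := by
      rw [← Finset.sum_add_sum_compl V, ← Finset.sum_add_sum_compl V (fun i => -(Matrix.toLin' N x i) ^ 2 / 2)]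
      have e1 : ∑ i ∈ Vᶜ, -(Matrix.toLin' N x i) ^ 2 / 2 = ∑ i ∈ Vᶜ, -x i ^ 2 / 2 := by
        refine Finset.sum_congr rfl fun i hi => ?_
        rw [hNx, if_neg (by simpa using hi)]
      have e2 : ∑ i ∈ V, x (σ i) ^ 2 = ∑ i ∈ V, x i ^ 2 :=
        Finset.sum_equiv σ (fun i => (hV i).symm) fun i _ => rfl
      have e3 : ∑ i ∈ V, -(Matrix.toLin' N x i) ^ 2 / 2 =
          ∑ i ∈ V, -((x i - t * x (σ i)) ^ 2) / (2 * (1 - t ^ 2)) := by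
        refine Finset.sum_congr rfl fun i hi => ?_
        rw [hNx, if_pos hi, mul_pow, inv_pow, Real.sq_sqrt hq.le]
        field_simp
      rw [e1, e3, add_right_comm]
      congr 1
      have e4 : ∑ i ∈ V, (-x i ^ 2 / 2 + (2 * t * x i * x (σ i) - t ^ 2 *
          (x i ^ 2 + x (σ i) ^ 2)) / (2 * (1 - t ^ 2)) -
          -((x i - t * x (σ i)) ^ 2) / (2 * (1 - t ^ 2))) = 0 := by
        have : ∀ i, (-x i ^ 2 / 2 + (2 * t * x i * x (σ i) - t ^ 2 *
          (x i ^ 2 + x (σ i) ^ 2)) / (2 * (1 - t ^ 2)) -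
          -((x i - t * x (σ i)) ^ 2) / (2 * (1 - t ^ 2))) = 0 := by
          intro i
          field_simp
          ring
        simp [this]
      rw [Finset.sum_sub_distrib, Finset.sum_add_distrib] at e4
      linarith
    rw [← hexp, Real.exp_add]
    ring
  have hNm : Measurable (Matrix.toLin' N) :=
    (LinearMap.continuous_of_finiteDimensional _).measurable
  rw [h, lintegral_withDensity_eq_lintegral_mul _ hmeas (by fun_prop), lintegral_congr key,
    lintegral_const_mul (f := fun a => (fun x : ι → ℝ => ∏ i, gaussianPDF 0 1 (x i))
      (Matrix.toLin' N a)) _ (hmeas.comp hNm), ← lintegral_map hmeas hNm,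
    Real.map_matrix_volume_pi_eq_smul_volume_pi hNpos.ne', lintegral_smul_measure]
  have hone : ∫⁻ x : ι → ℝ, ∏ i, gaussianPDF 0 1 (x i) = 1 := by
    rw [volume_pi, lintegral_prod_pi fun _ => measurable_gaussianPDF 0 1]
    simp [lintegral_gaussianPDF_eq_one]
  rw [hone, smul_eq_mul, mul_one, ← ENNReal.ofReal_mul hcprod.le,
    abs_of_pos (by positivity), hNdet]
  congr 1
  field_simp

/-! ### The likelihood ratio of the planted model -/

/-- The permutation of the edges induced by a permutation of the vertices. -/
def edgePerm {n : ℕ} (π : Equiv.Perm (Fin n)) : Equiv.Perm (Edge n) where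
  toFun := edgeMap π
  invFun := edgeMap π⁻¹
  left_inv e := by
    apply Subtype.ext
    simp [edgeMap, Sym2.map_map]
  right_inv e := by
    apply Subtype.ext
    simp [edgeMap, Sym2.map_map]

@[simp] lemma edgePerm_apply {n : ℕ} (π : Equiv.Perm (Fin n)) (e : Edge n) :
    edgePerm π e = edgeMap π e := rfl

/-- The likelihood ratio of the planted model with known permutation `π`, against the null model. -/
def lik {n : ℕ} (r : ℝ) (π : Equiv.Perm (Fin n)) (x : (Edge n → ℝ) × (Edge n → ℝ)) : ℝ :=
  ∏ e, ell r (x.1 e) (x.2 (edgeMap π e))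

lemma lik_nonneg {n : ℕ} {r : ℝ} (hr : r ^ 2 < 1) (π : Equiv.Perm (Fin n)) (x) :
    0 ≤ lik r π x := Finset.prod_nonneg fun _ _ => (ell_pos hr _ _).le

@[fun_prop]
lemma measurable_lik {n : ℕ} (r : ℝ) (π : Equiv.Perm (Fin n)) : Measurable (lik r π) := by
  unfold lik
  exact Finset.measurable_prod _ fun e _ => by fun_prop

/-- Conditionally on `W_e = a`, the law of `B_{π(e)}` has density `ell r a` with respect to the
standard Gaussian. -/
lemma map_gaussian_eq {r : ℝ} (hr : r ^ 2 < 1) (a : ℝ) :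
    Measure.map (fun z => r * a + √(1 - r ^ 2) * z) (gaussianReal 0 1) =
      (gaussianReal 0 1).withDensity fun b => ENNReal.ofReal (ell r a b) := by
  have h1 : 0 < 1 - r ^ 2 := by linarith
  have hs : 0 < √(1 - r ^ 2) := Real.sqrt_pos.mpr h1
  obtain ⟨v, hv⟩ : ∃ v : NNReal, (v : ℝ) = 1 - r ^ 2 := ⟨⟨1 - r ^ 2, h1.le⟩, rfl⟩
  have hv0 : v ≠ 0 := by
    rintro rfl
    simp at hv; linarith
  have hm : Measure.map (fun z => r * a + √(1 - r ^ 2) * z) (gaussianReal 0 1) =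
      gaussianReal (r * a) v := by
    have : (fun z => r * a + √(1 - r ^ 2) * z) =
      (fun z => r * a + z) ∘ (fun z => √(1 - r ^ 2) * z) := rfl
    rw [this, ← Measure.map_map (by fun_prop) (by fun_prop), gaussianReal_map_const_mul,
      gaussianReal_map_const_add]
    congr 1
    · simp
    · apply NNReal.eq
      simp [Real.sq_sqrt h1.le, hv]
  rw [hm, gaussianReal_of_var_ne_zero _ hv0, gaussianReal_of_var_ne_zero _ one_ne_zero,
    ← withDensity_mul _ (by fun_prop) (by fun_prop)]
  congr 1
  ext b
  rw [Pi.mul_apply, gaussianPDF, gaussianPDF, ← ENNReal.ofReal_mul (gaussianPDFReal_nonneg _ _ _)]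
  congr 1
  simp only [gaussianPDFReal, hv, ell, NNReal.coe_one, mul_one, sub_zero]
  rw [Real.sqrt_mul (x := 2 * Real.pi) (by positivity), mul_mul_mul_comm, ← Real.exp_add, mul_inv]
  congr 2
  field_simp
  ring

lemma map_gaussianEdges {n : ℕ} {r : ℝ} (hr : r ^ 2 < 1) (π : Equiv.Perm (Fin n))
    (W : Edge n → ℝ) :
    Measure.map (fun (Z : Edge n → ℝ) f =>
        r * W (edgeMap π⁻¹ f) + √(1 - r ^ 2) * Z (edgeMap π⁻¹ f)) (gaussianEdges n) =
      (gaussianEdges n).withDensity fun B => ENNReal.ofReal (lik r π (W, B)) := by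
  have hre : Measure.map (fun (Z : Edge n → ℝ) f => Z (edgeMap π⁻¹ f)) (gaussianEdges n) =
      gaussianEdges n := by
    have := (measurePreserving_piCongrLeft (fun _ : Edge n => gaussianReal 0 1) (edgePerm π)).map_eq
    convert! this using 2
    ext Z f
    rw [MeasurableEquiv.coe_piCongrLeft]
    obtain ⟨e, rfl⟩ := (edgePerm π).surjective f
    rw [Equiv.piCongrLeft_apply_apply]
    exact congrArg Z ((edgePerm π).symm_apply_apply e)
  have hcomp : (fun (Z : Edge n → ℝ) f =>
        r * W (edgeMap π⁻¹ f) + √(1 - r ^ 2) * Z (edgeMap π⁻¹ f)) =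
      (fun (Z : Edge n → ℝ) f => r * W (edgeMap π⁻¹ f) + √(1 - r ^ 2) * Z f) ∘
        (fun (Z : Edge n → ℝ) f => Z (edgeMap π⁻¹ f)) := rfl
  have hp : ∀ f : Edge n, IsProbabilityMeasure ((gaussianReal 0 1).withDensity
      fun b => ENNReal.ofReal (ell r (W (edgeMap π⁻¹ f)) b)) := fun f => by
    rw [← map_gaussian_eq hr]
    exact Measure.isProbabilityMeasure_map (by fun_prop)
  rw [hcomp, ← Measure.map_map (by fun_prop) (by fun_prop), hre]
  unfold gaussianEdges
  have hp' : ∀ f : Edge n, IsProbabilityMeasure (Measure.map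
      (fun z => r * W (edgeMap π⁻¹ f) + √(1 - r ^ 2) * z) (gaussianReal 0 1)) := fun f =>
    Measure.isProbabilityMeasure_map (by fun_prop)
  have h3 := Measure.pi_map_pi (μ := fun _ : Edge n => gaussianReal 0 1)
    (f := fun f z => r * W (edgeMap π⁻¹ f) + √(1 - r ^ 2) * z) (fun f => by fun_prop)
  rw [h3]
  simp only [map_gaussian_eq hr]
  rw [pi_withDensity fun f => by fun_prop]
  congr 1
  ext B
  rw [← ENNReal.ofReal_prod_of_nonneg fun i _ => (ell_pos hr _ _).le, lik,
    ← Equiv.prod_comp (edgePerm π)]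
  congr 1
  refine Finset.prod_congr rfl fun e _ => ?_
  rw [edgePerm_apply, show edgeMap π⁻¹ (edgeMap π e) = e from (edgePerm π).symm_apply_apply e]

/-- The planted model has density the average of `lik r π` over `π` with respect to the null model. -/
lemma PGauss_apply {n : ℕ} {r : ℝ} (hr : r ^ 2 < 1) {S : Set ((Edge n → ℝ) × (Edge n → ℝ))}
    (hS : MeasurableSet S) :
    PGauss n r S = ∫⁻ x in S, (Nat.factorial n : ENNReal)⁻¹ *
      ∑ π : Equiv.Perm (Fin n), ENNReal.ofReal (lik r π x) ∂(QGauss n) := by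
  have hm : Measurable (fun ω : Equiv.Perm (Fin n) × (Edge n → ℝ) × (Edge n → ℝ) =>
      (ω.2.1, fun f => r * ω.2.1 (edgeMap ω.1⁻¹ f) +
        Real.sqrt (1 - r ^ 2) * ω.2.2 (edgeMap ω.1⁻¹ f))) :=
    measurable_from_prod_countable_right fun π => by
      simp only
      fun_prop
  have hpt : ∀ π : Equiv.Perm (Fin n), ((gaussianEdges n).prod (gaussianEdges n))
      (Prod.mk π ⁻¹' ((fun ω : Equiv.Perm (Fin n) × (Edge n → ℝ) × (Edge n → ℝ) =>
      (ω.2.1, fun f => r * ω.2.1 (edgeMap ω.1⁻¹ f) +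
        Real.sqrt (1 - r ^ 2) * ω.2.2 (edgeMap ω.1⁻¹ f))) ⁻¹' S)) =
      ∫⁻ x in S, ENNReal.ofReal (lik r π x) ∂(QGauss n) := by
    intro π
    rw [Measure.prod_apply (measurable_prodMk_left (hm hS)), QGauss, ← lintegral_indicator hS,
      lintegral_prod _ ((by fun_prop : Measurable fun x => ENNReal.ofReal (lik r π x)).indicator
        hS).aemeasurable]
    refine lintegral_congr fun W => ?_
    have h2 := congrArg (fun μ => μ (Prod.mk W ⁻¹' S)) (map_gaussianEdges hr π W)
    rw [Measure.map_apply (by fun_prop) (measurable_prodMk_left hS),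
      withDensity_apply _ (measurable_prodMk_left hS),
      ← lintegral_indicator (measurable_prodMk_left hS)] at h2
    exact h2
  rw [PGauss, Measure.map_apply hm hS, Measure.prod_apply (hm hS), lintegral_fintype]
  simp only [hpt]
  rw [lintegral_const_mul _ (Finset.measurable_sum _ fun π _ => by fun_prop),
    lintegral_finsetSum _ fun π _ => by fun_prop, Finset.mul_sum]
  refine Finset.sum_congr rfl fun π _ => ?_
  rw [mul_comm, permUniform, PMF.toMeasure_apply_singleton _ _ (MeasurableSet.singleton _)]
  simp [Fintype.card_perm]

/-! ### Truncation of the likelihood ratio -/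

/-- The edges with both endpoints in `S`. -/
def edgesIn {n : ℕ} (S : Finset (Fin n)) : Finset (Edge n) :=
  Finset.univ.filter fun e => ∀ v ∈ e.1, v ∈ S

lemma mem_edgesIn {n : ℕ} {S : Finset (Fin n)} {e : Edge n} :
    e ∈ edgesIn S ↔ ∀ v ∈ e.1, v ∈ S := by simp [edgesIn]

/-- The fixed points of a vertex permutation. -/
def fixSet {n : ℕ} (σ : Equiv.Perm (Fin n)) : Finset (Fin n) :=
  Finset.univ.filter fun i => σ i = i

lemma edgeMap_mul {n : ℕ} (π π' : Equiv.Perm (Fin n)) (e : Edge n) :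
    edgeMap (π * π') e = edgeMap π (edgeMap π' e) := by
  apply Subtype.ext
  simp [edgeMap, Sym2.map_map]

lemma edgeMap_inv_edgeMap {n : ℕ} (π : Equiv.Perm (Fin n)) (e : Edge n) :
    edgeMap π⁻¹ (edgeMap π e) = e := (edgePerm π).symm_apply_apply e

lemma mem_edgesIn_fixSet_edgePerm {n : ℕ} (σ : Equiv.Perm (Fin n)) (e : Edge n) :
    edgePerm σ e ∈ edgesIn (fixSet σ) ↔ e ∈ edgesIn (fixSet σ) := by
  simp only [mem_edgesIn, edgePerm_apply, edgeMap, fixSet, Finset.mem_filter, Finset.mem_univ,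
    true_and, Sym2.mem_map]
  constructor
  · intro h v hv
    have := h (σ v) ⟨v, hv, rfl⟩
    exact σ.injective this
  · rintro h v ⟨w, hw, rfl⟩
    rw [h w hw, h w hw]

lemma ell_comm (r a b : ℝ) : ell r a b = ell r b a := by
  unfold ell; congr 3; ring

/-- The part of the likelihood ratio carried by the edges inside `S`. -/
def likOn {n : ℕ} (r : ℝ) (π : Equiv.Perm (Fin n)) (S : Finset (Fin n))
    (x : (Edge n → ℝ) × (Edge n → ℝ)) : ℝ :=
  ∏ e ∈ edgesIn S, ell r (x.1 e) (x.2 (edgeMap π e))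

/-- The good event for `π`: on every vertex set of size at least `n / 2`, the likelihood ratio
does not exceed the threshold `T`. -/
def goodSet {n : ℕ} (r : ℝ) (T : ℕ → ℝ) (π : Equiv.Perm (Fin n)) :
    Set ((Edge n → ℝ) × (Edge n → ℝ)) :=
  {x | ∀ S : Finset (Fin n), n ≤ 2 * S.card → likOn r π S x ≤ T S.card}

/-- The likelihood ratio truncated to the good event. -/
def tlik {n : ℕ} (r : ℝ) (T : ℕ → ℝ) (π : Equiv.Perm (Fin n)) :
    (Edge n → ℝ) × (Edge n → ℝ) → ℝ := (goodSet r T π).indicator (lik r π)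

@[fun_prop]
lemma measurable_likOn {n : ℕ} (r : ℝ) (π : Equiv.Perm (Fin n)) (S) : Measurable (likOn r π S) := by
  unfold likOn
  exact Finset.measurable_prod _ fun e _ => by fun_prop

lemma likOn_pos {n : ℕ} {r : ℝ} (hr : r ^ 2 < 1) (π : Equiv.Perm (Fin n)) (S) (x) :
    0 < likOn r π S x := Finset.prod_pos fun _ _ => ell_pos hr _ _

lemma measurableSet_goodSet {n : ℕ} (r : ℝ) (T : ℕ → ℝ) (π : Equiv.Perm (Fin n)) :
    MeasurableSet (goodSet r T π) := by
  have : goodSet r T π = ⋂ S : Finset (Fin n), ⋂ _ : n ≤ 2 * S.card,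
      {x | likOn r π S x ≤ T S.card} := by
    ext x; simp [goodSet]
  rw [this]
  exact MeasurableSet.iInter fun S => MeasurableSet.iInter fun _ =>
    measurableSet_le (measurable_likOn r π S) measurable_const

@[fun_prop]
lemma measurable_tlik {n : ℕ} (r : ℝ) (T : ℕ → ℝ) (π : Equiv.Perm (Fin n)) :
    Measurable (tlik r T π) := (measurable_lik r π).indicator (measurableSet_goodSet r T π)

lemma tlik_nonneg {n : ℕ} {r : ℝ} (hr : r ^ 2 < 1) (T : ℕ → ℝ) (π : Equiv.Perm (Fin n)) (x) :
    0 ≤ tlik r T π x := Set.indicator_nonneg (fun x _ => lik_nonneg hr π x) x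

lemma tlik_le {n : ℕ} {r : ℝ} (hr : r ^ 2 < 1) (T : ℕ → ℝ) (π : Equiv.Perm (Fin n)) (x) :
    tlik r T π x ≤ lik r π x := Set.indicator_le_self' (fun x _ => lik_nonneg hr π x) x

/-- Integrating out `B` turns pairs of kernels `ell r` into kernels `ell (r ^ 2)` along the edge
permutation induced by the quotient of the two permutations. -/
lemma lintegral_lik_mul {n : ℕ} {r : ℝ} (hr : r ^ 2 < 1) (π π' : Equiv.Perm (Fin n))
    (V : Finset (Edge n)) (hV : ∀ e, edgePerm (π⁻¹ * π') e ∈ V ↔ e ∈ V) :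
    ∫⁻ x, ENNReal.ofReal (lik r π x * ∏ e ∈ V, ell r (x.1 e) (x.2 (edgeMap π' e))) ∂(QGauss n) =
      ENNReal.ofReal ((1 - (r ^ 2) • subPerm (edgePerm (π⁻¹ * π')) V).det)⁻¹ := by
  rw [← lintegral_prod_ell _ V hV (sq_nonneg r) hr, QGauss, lintegral_prod _ (by
    refine Measurable.aemeasurable ?_
    refine ENNReal.measurable_ofReal.comp ((measurable_lik r π).mul ?_)
    exact Finset.measurable_prod _ fun e _ => by fun_prop)]
  refine lintegral_congr fun A => ?_
  have h1 : ∀ B : Edge n → ℝ, ENNReal.ofReal (lik r π (A, B) *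
        ∏ e ∈ V, ell r (A e) (B (edgeMap π' e))) =
      ∏ f, ENNReal.ofReal (if edgeMap π'⁻¹ f ∈ V then
        ell r (A (edgeMap π⁻¹ f)) (B f) * ell r (A (edgeMap π'⁻¹ f)) (B f) else
        ell r (A (edgeMap π⁻¹ f)) (B f)) := by
    intro B
    have e1 : lik r π (A, B) = ∏ f, ell r (A (edgeMap π⁻¹ f)) (B f) := by
      rw [lik, ← Equiv.prod_comp (edgePerm π) fun f => ell r (A (edgeMap π⁻¹ f)) (B f)]
      exact Finset.prod_congr rfl fun e _ => by rw [edgePerm_apply, edgeMap_inv_edgeMap]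
    have e2 : ∏ e ∈ V, ell r (A e) (B (edgeMap π' e)) =
        ∏ f, if edgeMap π'⁻¹ f ∈ V then ell r (A (edgeMap π'⁻¹ f)) (B f) else 1 := by
      rw [← Equiv.prod_comp (edgePerm π') fun f =>
        if edgeMap π'⁻¹ f ∈ V then ell r (A (edgeMap π'⁻¹ f)) (B f) else 1]
      simp only [edgePerm_apply, edgeMap_inv_edgeMap]
      rw [Finset.prod_ite_mem, Finset.univ_inter]
    rw [e1, e2, ← Finset.prod_mul_distrib, ENNReal.ofReal_prod_of_nonneg]
    · refine Finset.prod_congr rfl fun f _ => ?_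
      split_ifs <;> simp
    · intro f _
      have := ell_pos hr
      split_ifs
      · exact (mul_pos (this _ _) (this _ _)).le
      · simpa using (this _ _).le
  rw [lintegral_congr h1, gaussianEdges, lintegral_prod_pi
    (f := fun f b => ENNReal.ofReal (if edgeMap π'⁻¹ f ∈ V then
      ell r (A (edgeMap π⁻¹ f)) b * ell r (A (edgeMap π'⁻¹ f)) b else
      ell r (A (edgeMap π⁻¹ f)) b)) (fun f => by
    split_ifs <;> fun_prop)]
  have h2 : ∀ f, ∫⁻ b, ENNReal.ofReal (if edgeMap π'⁻¹ f ∈ V then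
        ell r (A (edgeMap π⁻¹ f)) b * ell r (A (edgeMap π'⁻¹ f)) b else
        ell r (A (edgeMap π⁻¹ f)) b) ∂(gaussianReal 0 1) =
      if edgeMap π'⁻¹ f ∈ V then ENNReal.ofReal (ell (r ^ 2) (A (edgeMap π'⁻¹ f))
        (A (edgePerm (π⁻¹ * π') (edgeMap π'⁻¹ f)))) else 1 := by
    intro f
    split_ifs
    · rw [lintegral_ell_mul_ell hr, ell_comm, edgePerm_apply, edgeMap_mul]
      have : edgeMap π' (edgeMap π'⁻¹ f) = f := (edgePerm π').apply_symm_apply f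
      rw [this]
    · rw [lintegral_ell hr]
  have hr4 : (r ^ 2) ^ 2 < 1 := by nlinarith [sq_nonneg r]
  rw [Finset.prod_congr rfl fun f _ => h2 f, ← Equiv.prod_comp (edgePerm π')]
  simp only [edgePerm_apply, edgeMap_inv_edgeMap]
  rw [Finset.prod_ite_mem, Finset.univ_inter,
    ENNReal.ofReal_prod_of_nonneg fun i _ => (ell_pos hr4 _ _).le]

/-- The bound for the second-moment contribution of a pair of permutations with quotient `σ`. -/
def pairBound {n : ℕ} (r : ℝ) (T : ℕ → ℝ) (σ : Equiv.Perm (Fin n)) : ℝ :=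
  if n ≤ 2 * (fixSet σ).card then
    T (fixSet σ).card * ((1 - (r ^ 2) • subPerm (edgePerm σ) (edgesIn (fixSet σ))ᶜ).det)⁻¹
  else ((1 - (r ^ 2) • subPerm (edgePerm σ) Finset.univ).det)⁻¹

lemma pairBound_nonneg {n : ℕ} {r : ℝ} (hr : r ^ 2 < 1) {T : ℕ → ℝ} (hT : ∀ k, 0 < T k)
    (σ : Equiv.Perm (Fin n)) : 0 ≤ pairBound r T σ := by
  have h := fun V => det_one_sub_pos (edgePerm σ) V (sq_nonneg r) hr
  unfold pairBound
  split_ifs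
  · exact (mul_pos (hT _) (inv_pos.mpr (h _))).le
  · exact (inv_pos.mpr (h _)).le

/-- When at least half of the vertices are fixed by the quotient, the likelihood ratio of the second
permutation inside the fixed-point set is bounded by its threshold; otherwise the truncation is
dropped. -/
lemma lintegral_tlik_mul_le {n : ℕ} {r : ℝ} (hr : r ^ 2 < 1) {T : ℕ → ℝ} (hT : ∀ k, 0 < T k)
    (π π' : Equiv.Perm (Fin n)) :
    ∫⁻ x, ENNReal.ofReal (tlik r T π x * tlik r T π' x) ∂(QGauss n) ≤
      ENNReal.ofReal (pairBound r T (π⁻¹ * π')) := by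
  unfold pairBound
  split_ifs with hk
  · set σ := π⁻¹ * π' with hσ
    rw [ENNReal.ofReal_mul (hT _).le, ← lintegral_lik_mul hr π π' (edgesIn (fixSet σ))ᶜ (fun e => by
      rw [Finset.mem_compl, Finset.mem_compl, mem_edgesIn_fixSet_edgePerm]),
      ← lintegral_const_mul' _ _ ENNReal.ofReal_ne_top]
    refine lintegral_mono fun x => ?_
    rw [← ENNReal.ofReal_mul (hT _).le]
    refine ENNReal.ofReal_le_ofReal ?_
    have hc : 0 ≤ ∏ e ∈ (edgesIn (fixSet σ))ᶜ, ell r (x.1 e) (x.2 (edgeMap π' e)) :=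
      Finset.prod_nonneg fun _ _ => (ell_pos hr _ _).le
    by_cases hx : x ∈ goodSet r T π'
    · have h1 : tlik r T π' x = likOn r π' (fixSet σ) x *
          ∏ e ∈ (edgesIn (fixSet σ))ᶜ, ell r (x.1 e) (x.2 (edgeMap π' e)) := by
        rw [tlik, Set.indicator_of_mem hx, lik, likOn, Finset.prod_mul_prod_compl]
      rw [h1]
      calc _ ≤ lik r π x * (T (fixSet σ).card *
            ∏ e ∈ (edgesIn (fixSet σ))ᶜ, ell r (x.1 e) (x.2 (edgeMap π' e))) := by
            refine mul_le_mul (tlik_le hr T π x) ?_ ?_ (lik_nonneg hr π x)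
            · exact mul_le_mul_of_nonneg_right (hx _ hk) hc
            · exact mul_nonneg (likOn_pos hr _ _ _).le hc
        _ = _ := by ring
    · have : tlik r T π' x = 0 := Set.indicator_of_notMem hx _
      rw [this, mul_zero]
      exact mul_nonneg (hT _).le (mul_nonneg (lik_nonneg hr π x) hc)
  · rw [← lintegral_lik_mul hr π π' Finset.univ (fun e => by simp)]
    refine lintegral_mono fun x => ENNReal.ofReal_le_ofReal ?_
    exact mul_le_mul (tlik_le hr T π x) (tlik_le hr T π' x) (tlik_nonneg hr T π' x)
      (lik_nonneg hr π x)

lemma lintegral_prod_edges {n : ℕ} (π : Equiv.Perm (Fin n)) {g : Edge n → ℝ × ℝ → ENNReal}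
    (hg : ∀ e, Measurable (g e)) :
    ∫⁻ x, ∏ e, g e (x.1 e, x.2 (edgeMap π e)) ∂(QGauss n) =
      ∏ e, ∫⁻ a, ∫⁻ b, g e (a, b) ∂(gaussianReal 0 1) ∂(gaussianReal 0 1) := by
  rw [QGauss, lintegral_prod _ (by
    exact (Finset.measurable_prod _ fun e _ => by fun_prop : Measurable _).aemeasurable)]
  have h1 : ∀ A : Edge n → ℝ, ∫⁻ B, ∏ e, g e (A e, B (edgeMap π e)) ∂(gaussianEdges n) =
      ∏ e, ∫⁻ b, g e (A e, b) ∂(gaussianReal 0 1) := by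
    intro A
    have : ∀ B : Edge n → ℝ, ∏ e, g e (A e, B (edgeMap π e)) =
        ∏ f, g (edgeMap π⁻¹ f) (A (edgeMap π⁻¹ f), B f) := by
      intro B
      rw [← Equiv.prod_comp (edgePerm π) fun f => g (edgeMap π⁻¹ f) (A (edgeMap π⁻¹ f), B f)]
      simp only [edgePerm_apply, edgeMap_inv_edgeMap]
    rw [lintegral_congr this, gaussianEdges, lintegral_prod_pi
      (f := fun f b => g (edgeMap π⁻¹ f) (A (edgeMap π⁻¹ f), b)) (fun f => by fun_prop),
      ← Equiv.prod_comp (edgePerm π)]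
    simp only [edgePerm_apply, edgeMap_inv_edgeMap]
  rw [lintegral_congr h1, gaussianEdges, lintegral_prod_pi
    (f := fun e a => ∫⁻ b, g e (a, b) ∂(gaussianReal 0 1)) (fun e => (hg e).lintegral_prod_right')]

lemma lintegral_lik {n : ℕ} {r : ℝ} (hr : r ^ 2 < 1) (π : Equiv.Perm (Fin n)) :
    ∫⁻ x, ENNReal.ofReal (lik r π x) ∂(QGauss n) = 1 := by
  have : ∀ x, ENNReal.ofReal (lik r π x) =
      ∏ e, (fun e (p : ℝ × ℝ) => ENNReal.ofReal (ell r p.1 p.2)) e (x.1 e, x.2 (edgeMap π e)) :=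
    fun x => ENNReal.ofReal_prod_of_nonneg fun i _ => (ell_pos hr _ _).le
  rw [lintegral_congr this, lintegral_prod_edges π
    (g := fun e (p : ℝ × ℝ) => ENNReal.ofReal (ell r p.1 p.2)) fun e => by fun_prop]
  simp [lintegral_ell hr]

/-- The tilted one-edge moment `E_Q[ell ^ (1 + l)]`. -/
def tiltMoment (r l : ℝ) : ℝ := (√(1 - r ^ 2))⁻¹ ^ l * (√(1 - l ^ 2 * r ^ 2))⁻¹

lemma lintegral_lik_mul_likOn_rpow {n : ℕ} {r l : ℝ} (hr : r ^ 2 < 1) (hl0 : 0 ≤ l) (hl1 : l ≤ 1)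
    (π : Equiv.Perm (Fin n)) (S : Finset (Fin n)) :
    ∫⁻ x, ENNReal.ofReal (lik r π x * likOn r π S x ^ l) ∂(QGauss n) =
      ENNReal.ofReal (tiltMoment r l ^ (edgesIn S).card) := by
  have : ∀ x, ENNReal.ofReal (lik r π x * likOn r π S x ^ l) =
      ∏ e, (fun e (p : ℝ × ℝ) => if e ∈ edgesIn S then ENNReal.ofReal (ell r p.1 p.2 ^ (1 + l))
        else ENNReal.ofReal (ell r p.1 p.2)) e (x.1 e, x.2 (edgeMap π e)) := by
    intro x
    have h0 := ell_pos hr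
    rw [lik, likOn, ← Real.finsetProd_rpow _ _ fun i _ => (h0 _ _).le,
      ← Finset.univ_inter (edgesIn S), ← Finset.prod_ite_mem, ← Finset.prod_mul_distrib,
      ENNReal.ofReal_prod_of_nonneg]
    · refine Finset.prod_congr rfl fun e _ => ?_
      simp only [Finset.univ_inter]
      split_ifs
      · rw [Real.rpow_add (h0 _ _), Real.rpow_one]
      · rw [mul_one]
    · intro e _
      have := h0 (x.1 e) (x.2 (edgeMap π e))
      split_ifs <;> positivity
  rw [lintegral_congr this, lintegral_prod_edges π
    (g := fun e (p : ℝ × ℝ) => if e ∈ edgesIn S then ENNReal.ofReal (ell r p.1 p.2 ^ (1 + l))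
        else ENNReal.ofReal (ell r p.1 p.2)) fun e => by split_ifs <;> fun_prop]
  have h2 : ∀ e : Edge n, ∫⁻ a, ∫⁻ b, (if e ∈ edgesIn S then ENNReal.ofReal (ell r a b ^ (1 + l))
        else ENNReal.ofReal (ell r a b)) ∂(gaussianReal 0 1) ∂(gaussianReal 0 1) =
      if e ∈ edgesIn S then ENNReal.ofReal (tiltMoment r l) else 1 := by
    intro e
    split_ifs
    · rw [lintegral_ell_rpow hr hl0 hl1, tiltMoment]
    · simp [lintegral_ell hr]
  rw [Finset.prod_congr rfl fun e _ => h2 e, Finset.prod_ite_mem, Finset.univ_inter,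
    Finset.prod_const, ENNReal.ofReal_pow]
  unfold tiltMoment
  positivity

/-- Where the truncation fails, some vertex set `S` of size at least `n / 2` has `1 ≤ (likOn / T)ˡ`;
this is the exponential Markov inequality combined with a union bound over `S`. -/
lemma lintegral_lik_sub_tlik_le {n : ℕ} {r l : ℝ} (hr : r ^ 2 < 1) (hl0 : 0 ≤ l) (hl1 : l ≤ 1)
    {T : ℕ → ℝ} (hT : ∀ k, 0 < T k) (π : Equiv.Perm (Fin n)) :
    ∫⁻ x, ENNReal.ofReal (lik r π x - tlik r T π x) ∂(QGauss n) ≤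
      ∑ S : Finset (Fin n) with n ≤ 2 * S.card,
        ENNReal.ofReal ((T S.card ^ l)⁻¹ * tiltMoment r l ^ (edgesIn S).card) := by
  have hTl : ∀ k, 0 ≤ (T k ^ l)⁻¹ := fun k => inv_nonneg.mpr (Real.rpow_nonneg (hT k).le _)
  have h1 : ∀ S : Finset (Fin n),
      ENNReal.ofReal ((T S.card ^ l)⁻¹ * tiltMoment r l ^ (edgesIn S).card) =
      ∫⁻ x, ENNReal.ofReal ((T S.card ^ l)⁻¹ * (lik r π x * likOn r π S x ^ l)) ∂(QGauss n) := by
    intro S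
    rw [ENNReal.ofReal_mul (hTl _), ← lintegral_lik_mul_likOn_rpow hr hl0 hl1 π S,
      ← lintegral_const_mul' _ _ ENNReal.ofReal_ne_top]
    exact lintegral_congr fun x => (ENNReal.ofReal_mul (hTl _)).symm
  rw [Finset.sum_congr rfl fun S _ => h1 S, ← lintegral_finsetSum _ fun S _ => by fun_prop]
  refine lintegral_mono fun x => ?_
  have hpos : ∀ S, 0 ≤ (T S.card ^ l)⁻¹ * (lik r π x * likOn r π S x ^ l) := fun S =>
    mul_nonneg (hTl _) (mul_nonneg (lik_nonneg hr π x) (Real.rpow_nonneg (likOn_pos hr π S x).le _))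
  rw [← ENNReal.ofReal_sum_of_nonneg fun S _ => hpos S]
  refine ENNReal.ofReal_le_ofReal ?_
  by_cases hx : x ∈ goodSet r T π
  · rw [tlik, Set.indicator_of_mem hx, sub_self]
    exact Finset.sum_nonneg fun S _ => hpos S
  · rw [tlik, Set.indicator_of_notMem hx, sub_zero]
    simp only [goodSet, Set.mem_ofPred_eq, not_forall, not_le] at hx
    obtain ⟨S, hS, hlt⟩ := hx
    refine le_trans ?_ (Finset.single_le_sum (fun S _ => hpos S)
      (Finset.mem_filter.mpr ⟨Finset.mem_univ S, hS⟩))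
    have h3 : 1 ≤ (T S.card ^ l)⁻¹ * likOn r π S x ^ l := by
      rw [← div_eq_inv_mul, one_le_div (Real.rpow_pos_of_pos (hT _) _)]
      exact Real.rpow_le_rpow (hT _).le hlt.le hl0
    nlinarith [lik_nonneg hr π x]

/-! ### The truncated second-moment method -/

/-- Truncated second-moment method: if a likelihood ratio `L` is close in `L¹` to a minorant `L'`
with second moment at most `1 + γ`, then the two measures are close in total variation. -/
lemma abs_sub_le_of_truncation {Ω : Type*} [MeasurableSpace Ω] {Q : Measure Ω}
    [IsProbabilityMeasure Q] {L L' : Ω → ℝ} (hL : Measurable L) (hL' : Measurable L')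
    (h0 : ∀ x, 0 ≤ L' x) (hle : ∀ x, L' x ≤ L x) {β γ : ℝ} (hβ : 0 ≤ β) (hγ : 0 ≤ γ)
    (h1 : ∫⁻ x, ENNReal.ofReal (L x) ∂Q = 1)
    (h2 : ∫⁻ x, ENNReal.ofReal (L x - L' x) ∂Q ≤ ENNReal.ofReal β)
    (h3 : ∫⁻ x, ENNReal.ofReal (L' x ^ 2) ∂Q ≤ ENNReal.ofReal (1 + γ)) (S : Set Ω) :
    |(∫⁻ x in S, ENNReal.ofReal (L x) ∂Q).toReal - (Q S).toReal| ≤ β + √(γ + 2 * β) := by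
  have hL0 : ∀ x, 0 ≤ L x := fun x => (h0 x).trans (hle x)
  have iL : Integrable L Q := by
    refine ⟨hL.aestronglyMeasurable, ?_⟩
    rw [hasFiniteIntegral_iff_ofReal (ae_of_all _ hL0), h1]; simp
  have iL' : Integrable L' Q := iL.mono hL'.aestronglyMeasurable (ae_of_all _ fun x => by
    rw [Real.norm_of_nonneg (h0 x), Real.norm_of_nonneg (hL0 x)]; exact hle x)
  have iL2 : Integrable (fun x => L' x ^ 2) Q := by
    refine ⟨(hL'.pow_const 2).aestronglyMeasurable, ?_⟩
    rw [hasFiniteIntegral_iff_ofReal (ae_of_all _ fun x => sq_nonneg _)]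
    exact lt_of_le_of_lt h3 ENNReal.ofReal_lt_top
  have e1 : ∫ x, L x ∂Q = 1 := by
    rw [integral_eq_lintegral_of_nonneg_ae (ae_of_all _ hL0) hL.aestronglyMeasurable, h1]; simp
  have e2 : ∫ x, (L x - L' x) ∂Q ≤ β := by
    rw [integral_eq_lintegral_of_nonneg_ae (ae_of_all _ fun x => sub_nonneg.mpr (hle x))
      (hL.sub hL').aestronglyMeasurable]
    exact ENNReal.toReal_le_of_le_ofReal hβ h2
  have e3 : ∫ x, L' x ^ 2 ∂Q ≤ 1 + γ := by
    rw [integral_eq_lintegral_of_nonneg_ae (ae_of_all _ fun x => sq_nonneg _)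
      (hL'.pow_const 2).aestronglyMeasurable]
    exact ENNReal.toReal_le_of_le_ofReal (by linarith) h3
  have e4 : 1 - β ≤ ∫ x, L' x ∂Q := by
    rw [integral_sub iL iL', e1] at e2; linarith
  have i1 : Integrable (fun x => L' x - 1) Q := iL'.sub (integrable_const _)
  have e5 : ∫ x, (L' x - 1) ^ 2 ∂Q ≤ γ + 2 * β := by
    have : ∀ x, (L' x - 1) ^ 2 = L' x ^ 2 - 2 * L' x + 1 := fun x => by ring
    have i3 : Integrable (fun x => L' x ^ 2 - 2 * L' x) Q := iL2.sub (iL'.const_mul 2)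
    rw [integral_congr_ae (ae_of_all _ this), integral_add i3
      (integrable_const _), integral_sub iL2 (iL'.const_mul 2), integral_const_mul]
    simp
    linarith
  have i2 : Integrable (fun x => (L' x - 1) ^ 2) Q := by
    have : (fun x => (L' x - 1) ^ 2) = fun x => (L' x ^ 2 - 2 * L' x) + 1 := by ext x; ring
    rw [this]
    exact (iL2.sub (iL'.const_mul 2)).add (integrable_const _)
  have e6 : ∫ x, |L' x - 1| ∂Q ≤ √(γ + 2 * β) := by
    have hm : MemLp (fun x => |L' x - 1|) 2 Q := by
      rw [memLp_two_iff_integrable_sq i1.abs.aestronglyMeasurable]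
      simpa only [sq_abs] using i2
    have hv := variance_eq_sub hm
    have hv0 := variance_nonneg (fun x => |L' x - 1|) Q
    rw [hv] at hv0
    simp only [Pi.pow_apply, sq_abs] at hv0
    apply Real.le_sqrt_of_sq_le
    linarith
  have e7 : (∫⁻ x in S, ENNReal.ofReal (L x) ∂Q).toReal = ∫ x in S, L x ∂Q := by
    rw [integral_eq_lintegral_of_nonneg_ae (ae_of_all _ hL0) hL.aestronglyMeasurable]
  have e8 : (Q S).toReal = ∫ x in S, (1 : ℝ) ∂Q := by simp [Measure.real]
  have e9 : ∫ x in S, L x ∂Q - ∫ x in S, (1 : ℝ) ∂Q =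
      ∫ x in S, (L x - L' x) ∂Q + ∫ x in S, (L' x - 1) ∂Q := by
    have i3 : Integrable (fun x => L x - L' x) Q := iL.sub iL'
    rw [← integral_add i3.integrableOn i1.integrableOn,
      ← integral_sub iL.integrableOn (integrable_const _)]
    congr 1; ext x; ring
  rw [e7, e8, e9]
  refine (abs_add_le _ _).trans (add_le_add ?_ ?_)
  · rw [abs_of_nonneg (integral_nonneg fun x => sub_nonneg.mpr (hle x))]
    exact (setIntegral_le_integral (iL.sub iL') (ae_of_all _ fun x => sub_nonneg.mpr (hle x))).trans e2
  · refine (abs_integral_le_integral_abs).trans (le_trans ?_ e6)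
    exact setIntegral_le_integral i1.abs (ae_of_all _ fun x => abs_nonneg _)

/-- Bound on the probability, under the planted model, that the truncation fails. -/
def failBound (n : ℕ) (r l : ℝ) (T : ℕ → ℝ) : ℝ :=
  ∑ S : Finset (Fin n) with n ≤ 2 * S.card,
    (T S.card ^ l)⁻¹ * tiltMoment r l ^ (edgesIn S).card

lemma tiltMoment_nonneg (r l : ℝ) : 0 ≤ tiltMoment r l := by unfold tiltMoment; positivity

lemma failBound_nonneg {n : ℕ} {r l : ℝ} {T : ℕ → ℝ} (hT : ∀ k, 0 < T k) :
    0 ≤ failBound n r l T :=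
  Finset.sum_nonneg fun _ _ => mul_nonneg (inv_nonneg.mpr (Real.rpow_nonneg (hT _).le _))
    (pow_nonneg (tiltMoment_nonneg r l) _)

/-- Since the second-moment bound of a pair of permutations depends only on their quotient, the
average over pairs is an average over a single uniform permutation. -/
lemma TV_le {n : ℕ} {r l : ℝ} (hr : r ^ 2 < 1) (hl0 : 0 ≤ l) (hl1 : l ≤ 1)
    {T : ℕ → ℝ} (hT : ∀ k, 0 < T k) {β γ : ℝ} (hγ : 0 ≤ γ) (hβ : failBound n r l T ≤ β)
    (hpair : (n.factorial : ℝ)⁻¹ * ∑ σ : Equiv.Perm (Fin n), pairBound r T σ ≤ 1 + γ) :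
    TV (PGauss n r) (QGauss n) ≤ β + √(γ + 2 * β) := by
  have hβ0 : 0 ≤ β := (failBound_nonneg hT).trans hβ
  have hc0 : (0 : ℝ) ≤ (n.factorial : ℝ)⁻¹ := by positivity
  have hcard : (Fintype.card (Equiv.Perm (Fin n)) : ℝ) = n.factorial := by
    rw [Fintype.card_perm, Fintype.card_fin]
  have hne : (n.factorial : ℝ) ≠ 0 := by positivity
  have hce : (Nat.factorial n : ENNReal)⁻¹ = ENNReal.ofReal (n.factorial : ℝ)⁻¹ := by
    rw [ENNReal.ofReal_inv_of_pos (by positivity), ENNReal.ofReal_natCast]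
  -- averaging a bound that is uniform in `π`
  have havg : ∀ {f : Equiv.Perm (Fin n) → ENNReal} {b : ENNReal}, (∀ π, f π ≤ b) →
      ENNReal.ofReal (n.factorial : ℝ)⁻¹ * ∑ π, f π ≤ b := by
    intro f b h
    calc _ ≤ ENNReal.ofReal (n.factorial : ℝ)⁻¹ * ∑ _π : Equiv.Perm (Fin n), b := by
          gcongr; exact h _
      _ = b := by
          rw [← hce, Finset.sum_const, nsmul_eq_mul, Finset.card_univ, Fintype.card_perm,
            Fintype.card_fin, ← mul_assoc, ENNReal.inv_mul_cancel (by
              exact_mod_cast Nat.factorial_ne_zero n) (by simp), one_mul]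
  set L : (Edge n → ℝ) × (Edge n → ℝ) → ℝ :=
    fun x => (n.factorial : ℝ)⁻¹ * ∑ π : Equiv.Perm (Fin n), lik r π x with hLdef
  set L' : (Edge n → ℝ) × (Edge n → ℝ) → ℝ :=
    fun x => (n.factorial : ℝ)⁻¹ * ∑ π : Equiv.Perm (Fin n), tlik r T π x with hL'def
  have hL : Measurable L := (Finset.measurable_sum _ fun π _ => measurable_lik r π).const_mul _
  have hL' : Measurable L' :=
    (Finset.measurable_sum _ fun π _ => measurable_tlik r T π).const_mul _
  have hofL : ∀ x, ENNReal.ofReal (L x) =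
      (Nat.factorial n : ENNReal)⁻¹ * ∑ π, ENNReal.ofReal (lik r π x) := by
    intro x
    rw [hLdef, ENNReal.ofReal_mul hc0, hce,
      ENNReal.ofReal_sum_of_nonneg fun π _ => lik_nonneg hr π x]
  have key := abs_sub_le_of_truncation (Q := QGauss n) hL hL'
    (fun x => mul_nonneg hc0 (Finset.sum_nonneg fun π _ => tlik_nonneg hr T π x))
    (fun x => mul_le_mul_of_nonneg_left (Finset.sum_le_sum fun π _ => tlik_le hr T π x) hc0)
    hβ0 hγ ?_ ?_ ?_
  · refine Real.iSup_le (fun S => ?_) (by positivity)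
    rw [PGauss_apply hr S.2]
    simp only [← hofL]
    exact key S.1
  · rw [lintegral_congr hofL, lintegral_const_mul _ (by fun_prop), lintegral_finsetSum _
      fun π _ => by fun_prop]
    simp only [lintegral_lik hr, Finset.sum_const, nsmul_eq_mul, Finset.card_univ,
      Fintype.card_perm, Fintype.card_fin, mul_one]
    exact ENNReal.inv_mul_cancel (by exact_mod_cast Nat.factorial_ne_zero n) (by simp)
  · have : ∀ x, ENNReal.ofReal (L x - L' x) = ENNReal.ofReal (n.factorial : ℝ)⁻¹ *
        ∑ π, ENNReal.ofReal (lik r π x - tlik r T π x) := by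
      intro x
      rw [hLdef, hL'def, ← mul_sub, ← Finset.sum_sub_distrib, ENNReal.ofReal_mul hc0,
        ENNReal.ofReal_sum_of_nonneg fun π _ => sub_nonneg.mpr (tlik_le hr T π x)]
    rw [lintegral_congr this, lintegral_const_mul _ (by fun_prop), lintegral_finsetSum _
      fun π _ => by fun_prop]
    refine havg fun π => (lintegral_lik_sub_tlik_le hr hl0 hl1 hT π).trans ?_
    rw [← ENNReal.ofReal_sum_of_nonneg fun S _ => mul_nonneg
      (inv_nonneg.mpr (Real.rpow_nonneg (hT _).le _)) (pow_nonneg (tiltMoment_nonneg r l) _)]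
    exact ENNReal.ofReal_le_ofReal hβ
  · have : ∀ x, ENNReal.ofReal (L' x ^ 2) = ENNReal.ofReal (n.factorial : ℝ)⁻¹ * ∑ π,
        (ENNReal.ofReal (n.factorial : ℝ)⁻¹ * ∑ π', ENNReal.ofReal (tlik r T π x * tlik r T π' x)) := by
      intro x
      have h0 := fun π => tlik_nonneg hr T π x
      have : L' x ^ 2 = (n.factorial : ℝ)⁻¹ * ∑ π, ((n.factorial : ℝ)⁻¹ *
          ∑ π', tlik r T π x * tlik r T π' x) := by
        rw [← Finset.mul_sum, ← Finset.sum_mul_sum, hL'def]; ring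
      rw [this, ENNReal.ofReal_mul hc0, ENNReal.ofReal_sum_of_nonneg fun π _ => mul_nonneg hc0
        (Finset.sum_nonneg fun π' _ => mul_nonneg (h0 _) (h0 _))]
      congr 1
      refine Finset.sum_congr rfl fun π _ => ?_
      rw [ENNReal.ofReal_mul hc0, ENNReal.ofReal_sum_of_nonneg fun π' _ => mul_nonneg (h0 _) (h0 _)]
    rw [lintegral_congr this, lintegral_const_mul _ (by fun_prop), lintegral_finsetSum _
      fun π _ => by fun_prop]
    refine havg fun π => ?_
    rw [lintegral_const_mul _ (by fun_prop), lintegral_finsetSum _ fun π _ => by fun_prop]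
    calc _ ≤ ENNReal.ofReal (n.factorial : ℝ)⁻¹ *
          ∑ π', ENNReal.ofReal (pairBound r T (π⁻¹ * π')) := by
          gcongr; exact lintegral_tlik_mul_le hr hT _ _
      _ = ENNReal.ofReal ((n.factorial : ℝ)⁻¹ * ∑ σ : Equiv.Perm (Fin n), pairBound r T σ) := by
          rw [ENNReal.ofReal_mul hc0, ENNReal.ofReal_sum_of_nonneg fun σ _ =>
            pairBound_nonneg hr hT σ]
          congr 1
          exact Equiv.sum_comp (Equiv.mulLeft π⁻¹) fun σ => ENNReal.ofReal (pairBound r T σ)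
      _ ≤ _ := ENNReal.ofReal_le_ofReal hpair

/-! ### Fixed points and 2-cycles of permutations -/

/-- The smaller elements of the 2-cycles of `σ`; its cardinality is the number of 2-cycles. -/
def twoCyc {n : ℕ} (σ : Equiv.Perm (Fin n)) : Finset (Fin n) :=
  Finset.univ.filter fun i => i < σ i ∧ σ (σ i) = i

lemma mem_fixSet {n : ℕ} {σ : Equiv.Perm (Fin n)} {i : Fin n} : i ∈ fixSet σ ↔ σ i = i := by
  simp [fixSet]

lemma mem_twoCyc {n : ℕ} {σ : Equiv.Perm (Fin n)} {i : Fin n} :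
    i ∈ twoCyc σ ↔ i < σ i ∧ σ (σ i) = i := by simp [twoCyc]

lemma card_fixing {n : ℕ} (T : Finset (Fin n)) :
    (Finset.univ.filter fun σ : Equiv.Perm (Fin n) => T ⊆ fixSet σ).card =
      (n - T.card).factorial := by
  have e := Equiv.Perm.subtypeEquivSubtypePerm fun i : Fin n => i ∉ T
  have h := Fintype.card_congr e
  rw [Fintype.card_perm] at h
  have h1 : Fintype.card {i : Fin n // i ∉ T} = n - T.card := by
    rw [Fintype.card_subtype_compl]; simp
  rw [h1] at h
  rw [h, Fintype.card_subtype]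
  congr 1
  ext σ
  simp [Finset.subset_iff, mem_fixSet]

/-- Removing a transposition `(i j)` from `σ` turns the 2-cycle through `i` into two fixed
points; counting the choices of `j` gives the bound by induction on `S`. -/
lemma card_fixing_twoCyc_le {n : ℕ} (S : Finset (Fin n)) : ∀ T : Finset (Fin n), Disjoint T S →
    (Finset.univ.filter fun σ : Equiv.Perm (Fin n) => T ⊆ fixSet σ ∧ S ⊆ twoCyc σ).card ≤
      (n - T.card - S.card).factorial := by
  induction S using Finset.induction_on with
  | empty =>
    intro T _
    simpa using (card_fixing T).le
  | insert i S hi ih =>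
    intro T hd
    rw [Finset.disjoint_insert_right] at hd
    obtain ⟨hiT, hTS⟩ := hd
    have hsub : (Finset.univ.filter fun σ : Equiv.Perm (Fin n) =>
        T ⊆ fixSet σ ∧ insert i S ⊆ twoCyc σ) ⊆
        (insert i (T ∪ S))ᶜ.biUnion fun j => (Finset.univ.filter fun σ : Equiv.Perm (Fin n) =>
          insert i (insert j T) ⊆ fixSet σ ∧ S ⊆ twoCyc σ).image (· * Equiv.swap i j) := by
      intro σ hσ
      simp only [Finset.mem_filter, Finset.mem_univ, true_and, Finset.insert_subset_iff] at hσ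
      obtain ⟨hF, hiY, hY⟩ := hσ
      rw [mem_twoCyc] at hiY
      obtain ⟨hlt, hinv⟩ := hiY
      simp only [Finset.mem_biUnion, Finset.mem_compl, Finset.mem_insert, Finset.mem_union,
        not_or, Finset.mem_image, Finset.mem_filter, Finset.mem_univ, true_and,
        Finset.insert_subset_iff]
      have hjT : σ i ∉ T := fun h => by
        have := mem_fixSet.mp (hF h); rw [hinv] at this; omega
      have hjS : σ i ∉ S := fun h => by
        have := (mem_twoCyc.mp (hY h)).1; rw [hinv] at this; omega
      refine ⟨σ i, ⟨by omega, hjT, hjS⟩, σ * Equiv.swap i (σ i), ⟨⟨?_, ?_, ?_⟩, ?_⟩, ?_⟩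
      · simp [mem_fixSet, hinv]
      · simp [mem_fixSet]
      · intro x hx
        have h1 : x ≠ i := fun h => hiT (h ▸ hx)
        have h2 : x ≠ σ i := fun h => hjT (h ▸ hx)
        rw [mem_fixSet, Equiv.Perm.mul_apply, Equiv.swap_apply_of_ne_of_ne h1 h2]
        exact mem_fixSet.mp (hF hx)
      · intro x hx
        have h1 : x ≠ i := fun h => hi (h ▸ hx)
        have h2 : x ≠ σ i := fun h => hjS (h ▸ hx)
        have hx' := mem_twoCyc.mp (hY hx)
        have h3 : σ x ≠ i := fun h => h2 (by rw [← h]; exact hx'.2.symm)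
        have h4 : σ x ≠ σ i := fun h => h1 (σ.injective h)
        rw [mem_twoCyc]
        simp only [Equiv.Perm.mul_apply, Equiv.swap_apply_of_ne_of_ne h1 h2,
          Equiv.swap_apply_of_ne_of_ne h3 h4]
        exact hx'
      · rw [mul_assoc, Equiv.swap_mul_self, mul_one]
    refine (Finset.card_le_card hsub).trans (Finset.card_biUnion_le.trans ?_)
    have hcU : (insert i (T ∪ S)).card = T.card + S.card + 1 := by
      rw [Finset.card_insert_of_notMem (by simp [hiT, hi]), Finset.card_union_of_disjoint hTS]
    have hterm : ∀ j ∈ (insert i (T ∪ S))ᶜ, ((Finset.univ.filter fun σ : Equiv.Perm (Fin n) =>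
          insert i (insert j T) ⊆ fixSet σ ∧ S ⊆ twoCyc σ).image (· * Equiv.swap i j)).card ≤
        (n - (T.card + 2) - S.card).factorial := by
      intro j hj
      simp only [Finset.mem_compl, Finset.mem_insert, Finset.mem_union, not_or] at hj
      refine Finset.card_image_le.trans ?_
      have := ih (insert i (insert j T)) (by
        rw [Finset.disjoint_insert_left, Finset.disjoint_insert_left]
        exact ⟨hi, hj.2.2, hTS⟩)
      rwa [Finset.card_insert_of_notMem (by
        simp only [Finset.mem_insert, not_or]; exact ⟨fun h => hj.1 h.symm, hiT⟩),
        Finset.card_insert_of_notMem hj.2.1] at this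
    refine (Finset.sum_le_card_nsmul _ _ _ hterm).trans ?_
    rw [Finset.card_compl, hcU, Fintype.card_fin, Finset.card_insert_of_notMem hi, smul_eq_mul,
      show n - T.card - (S.card + 1) = n - (T.card + S.card + 1) by omega,
      show n - (T.card + 2) - S.card = n - (T.card + S.card + 1) - 1 by omega]
    rcases Nat.eq_zero_or_pos (n - (T.card + S.card + 1)) with h | h
    · rw [h]; simp
    · rw [Nat.mul_factorial_pred h.ne']

/-- Truncated exponential series in factorial form. -/
lemma sum_choose_mul_factorial_le (m : ℕ) {u : ℝ} (hu : 0 ≤ u) :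
    ∑ b ∈ Finset.range (m + 1), (m.choose b : ℝ) * (u ^ b * (m - b).factorial) ≤
      m.factorial * Real.exp u := by
  have : ∀ b ∈ Finset.range (m + 1), (m.choose b : ℝ) * (u ^ b * (m - b).factorial) =
      m.factorial * (u ^ b / b.factorial) := by
    intro b hb
    have hb' : b ≤ m := by simpa [Nat.lt_succ_iff] using hb
    have := Nat.choose_mul_factorial_mul_factorial hb'
    have h2 : (m.choose b : ℝ) * b.factorial * (m - b).factorial = m.factorial := by
      exact_mod_cast this
    rw [← h2]; field_simp
  rw [Finset.sum_congr rfl this, ← Finset.mul_sum]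
  gcongr
  exact Real.sum_le_exp_of_nonneg hu _

lemma one_add_pow_card {α : Type*} [DecidableEq α] (s : Finset α) (u : ℝ) :
    (1 + u) ^ s.card = ∑ S ∈ s.powerset, u ^ S.card := by
  rw [add_comm, ← Finset.sum_pow_mul_eq_add_pow]; simp

lemma sum_twoCyc_fixing_le {n : ℕ} (T : Finset (Fin n)) {u : ℝ} (hu : 0 ≤ u) :
    ∑ σ : Equiv.Perm (Fin n) with T ⊆ fixSet σ, (1 + u) ^ (twoCyc σ).card ≤
      (n - T.card).factorial * Real.exp u := by
  have h1 : ∀ σ ∈ (Finset.univ.filter fun σ : Equiv.Perm (Fin n) => T ⊆ fixSet σ),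
      (1 + u) ^ (twoCyc σ).card = ∑ S ∈ (Tᶜ).powerset, if S ⊆ twoCyc σ then u ^ S.card else 0 := by
    intro σ hσ
    simp only [Finset.mem_filter, Finset.mem_univ, true_and] at hσ
    rw [one_add_pow_card, ← Finset.sum_filter]
    refine Finset.sum_congr ?_ fun _ _ => rfl
    ext S
    simp only [Finset.mem_powerset, Finset.mem_filter]
    refine ⟨fun h => ⟨fun i hi => ?_, h⟩, fun h => h.2⟩
    rw [Finset.mem_compl]
    intro hiT
    have h1 := mem_fixSet.mp (hσ hiT)
    have h2 := (mem_twoCyc.mp (h hi)).1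
    omega
  rw [Finset.sum_congr rfl h1, Finset.sum_comm]
  have h2 : ∀ S ∈ (Tᶜ).powerset,
      ∑ σ : Equiv.Perm (Fin n) with T ⊆ fixSet σ, (if S ⊆ twoCyc σ then u ^ S.card else 0) ≤
      u ^ S.card * (n - T.card - S.card).factorial := by
    intro S hS
    rw [← Finset.sum_filter, Finset.filter_filter, Finset.sum_const, nsmul_eq_mul, mul_comm]
    have := card_fixing_twoCyc_le S T (by
      rw [Finset.mem_powerset] at hS
      exact Finset.disjoint_of_subset_right hS disjoint_compl_right)
    gcongr
  refine (Finset.sum_le_sum h2).trans ?_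
  rw [Finset.sum_powerset_apply_card fun b => u ^ b * ((n - T.card - b).factorial : ℝ),
    Finset.card_compl, Fintype.card_fin]
  simp only [nsmul_eq_mul]
  exact sum_choose_mul_factorial_le _ hu

/-- Joint generating function of the numbers of fixed points and 2-cycles of a uniform
permutation, compared with that of independent Poisson variables. -/
lemma sum_fix_twoCyc_le (n : ℕ) {s u : ℝ} (hs : 0 ≤ s) (hu : 0 ≤ u) :
    (n.factorial : ℝ)⁻¹ * ∑ σ : Equiv.Perm (Fin n),
      (1 + s) ^ (fixSet σ).card * (1 + u) ^ (twoCyc σ).card ≤ Real.exp s * Real.exp u := by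
  rw [inv_mul_le_iff₀ (by positivity)]
  have h1 : ∀ σ : Equiv.Perm (Fin n), (1 + s) ^ (fixSet σ).card * (1 + u) ^ (twoCyc σ).card =
      ∑ T ∈ (Finset.univ : Finset (Fin n)).powerset,
        s ^ T.card * if T ⊆ fixSet σ then (1 + u) ^ (twoCyc σ).card else 0 := by
    intro σ
    rw [one_add_pow_card, Finset.sum_mul]
    simp only [mul_ite, mul_zero]
    rw [← Finset.sum_filter]
    refine Finset.sum_congr ?_ fun _ _ => rfl
    ext T; simp
  rw [Finset.sum_congr rfl fun σ _ => h1 σ, Finset.sum_comm]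
  have h2 : ∀ T ∈ (Finset.univ : Finset (Fin n)).powerset,
      ∑ σ : Equiv.Perm (Fin n), s ^ T.card *
        (if T ⊆ fixSet σ then (1 + u) ^ (twoCyc σ).card else 0) ≤
      (s ^ T.card * (n - T.card).factorial) * Real.exp u := by
    intro T _
    rw [← Finset.mul_sum, ← Finset.sum_filter, mul_assoc]
    gcongr
    exact sum_twoCyc_fixing_le T hu
  refine (Finset.sum_le_sum h2).trans ?_
  rw [← Finset.sum_mul, Finset.sum_powerset_apply_card fun a => s ^ a * ((n - a).factorial : ℝ),
    Finset.card_univ, Fintype.card_fin, ← mul_assoc]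
  simp only [nsmul_eq_mul]
  gcongr
  exact sum_choose_mul_factorial_le _ hs

/-- Union bound over the `n.choose k` possible fixed-point sets. -/
lemma sum_twoCyc_fix_eq_le (n k : ℕ) {u : ℝ} (hu : 0 ≤ u) :
    (n.factorial : ℝ)⁻¹ * ∑ σ : Equiv.Perm (Fin n) with (fixSet σ).card = k,
      (1 + u) ^ (twoCyc σ).card ≤ (k.factorial : ℝ)⁻¹ * Real.exp u := by
  rw [inv_mul_le_iff₀ (by positivity)]
  by_cases hk : k ≤ n
  swap
  · rw [Finset.filter_false_of_mem, Finset.sum_empty]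
    · positivity
    · intro σ _ h
      have := Finset.card_le_univ (fixSet σ)
      rw [Fintype.card_fin] at this
      omega
  have hpos : ∀ σ : Equiv.Perm (Fin n), 0 ≤ (1 + u) ^ (twoCyc σ).card := fun σ => by positivity
  calc _ = ∑ T ∈ Finset.univ.powersetCard k,
        ∑ σ ∈ Finset.univ.filter (fun σ : Equiv.Perm (Fin n) => (fixSet σ).card = k) with
          fixSet σ = T, (1 + u) ^ (twoCyc σ).card :=
        (Finset.sum_fiberwise_of_maps_to (fun σ hσ => by simpa using hσ) _).symm
    _ ≤ ∑ T ∈ Finset.univ.powersetCard k, ∑ σ : Equiv.Perm (Fin n) with T ⊆ fixSet σ,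
        (1 + u) ^ (twoCyc σ).card := by
        refine Finset.sum_le_sum fun T _ =>
          Finset.sum_le_sum_of_subset_of_nonneg (fun σ hσ => ?_) fun σ _ _ => hpos σ
        simp only [Finset.mem_filter, Finset.mem_univ, true_and] at hσ ⊢
        exact hσ.2.ge
    _ ≤ ∑ T ∈ (Finset.univ : Finset (Fin n)).powersetCard k,
        ((n - k).factorial : ℝ) * Real.exp u := by
        refine Finset.sum_le_sum fun T hT => ?_
        rw [← (Finset.mem_powersetCard.mp hT).2]
        exact sum_twoCyc_fixing_le T hu
    _ = _ := by
        rw [Finset.sum_const, Finset.card_powersetCard, Finset.card_univ, Fintype.card_fin,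
          nsmul_eq_mul]
        have h2 : (n.choose k : ℝ) * k.factorial * (n - k).factorial = n.factorial := by
          exact_mod_cast Nat.choose_mul_factorial_mul_factorial hk
        rw [← h2]; field_simp

/-! ### Periods of edges under a vertex permutation -/

lemma two_mul_card_edgesIn_le {n : ℕ} (S : Finset (Fin n)) :
    2 * (edgesIn S).card ≤ S.card ^ 2 := by
  have h : (edgesIn S).card ≤ (S.offDiag.image fun p => s(p.1, p.2)).card := by
    rw [← Finset.card_image_of_injective (edgesIn S) Subtype.val_injective]
    refine Finset.card_le_card fun z hz => ?_
    obtain ⟨⟨z, hz0⟩, hz1, rfl⟩ := Finset.mem_image.mp hz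
    rw [mem_edgesIn] at hz1
    induction z using Sym2.ind with
    | _ a b =>
      simp only [Sym2.mem_iff, forall_eq_or_imp, forall_eq] at hz1
      rw [Finset.mem_image]
      refine ⟨(a, b), ?_, rfl⟩
      rw [Finset.mem_offDiag]
      exact ⟨hz1.1, hz1.2, by simpa using hz0⟩
  have h2 : (S.offDiag.image fun p => s(p.1, p.2)).card = S.card.choose 2 :=
    Sym2.card_image_offDiag S
  rw [h2, Nat.choose_two_right] at h
  have h3 : S.card * (S.card - 1) ≤ S.card ^ 2 := by
    rw [sq]; exact Nat.mul_le_mul_left _ (Nat.sub_le _ _)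
  omega

lemma two_mul_card_edge_le (n : ℕ) : 2 * Fintype.card (Edge n) ≤ n ^ 2 := by
  have := two_mul_card_edgesIn_le (Finset.univ : Finset (Fin n))
  have h : edgesIn (Finset.univ : Finset (Fin n)) = Finset.univ := by ext e; simp [mem_edgesIn]
  rwa [h, Finset.card_univ, Finset.card_univ, Fintype.card_fin] at this

/-- An edge fixed by `σ` whose endpoints are not both fixed is a 2-cycle of `σ`. -/
lemma card_fixed_edges_le {n : ℕ} (σ : Equiv.Perm (Fin n)) :
    ((edgesIn (fixSet σ))ᶜ.filter fun e => edgePerm σ e = e).card ≤ (twoCyc σ).card := by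
  rw [← Finset.card_image_of_injective _ Subtype.val_injective]
  refine (Finset.card_le_card (t := (twoCyc σ).image fun i => s(i, σ i)) fun z hz => ?_).trans
    Finset.card_image_le
  obtain ⟨⟨z, hz0⟩, hz1, rfl⟩ := Finset.mem_image.mp hz
  rw [Finset.mem_filter, Finset.mem_compl, mem_edgesIn] at hz1
  simp only [edgePerm_apply, edgeMap, Subtype.mk.injEq] at hz1
  induction z using Sym2.ind with
  | _ a b =>
    simp only [Sym2.mem_iff, forall_eq_or_imp, forall_eq, mem_fixSet, Sym2.map_mk,
      Sym2.eq_iff] at hz1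
    have hab : a ≠ b := by simpa using hz0
    rw [Finset.mem_image]
    obtain ⟨hn, h | ⟨h1, h2⟩⟩ := hz1
    · exact absurd h hn
    · rcases lt_or_gt_of_ne hab with h | h
      · exact ⟨a, mem_twoCyc.mpr ⟨by rwa [h1], by rw [h1, h2]⟩, by rw [h1]⟩
      · exact ⟨b, mem_twoCyc.mpr ⟨by rwa [h2], by rw [h2, h1]⟩, by rw [h2, Sym2.eq_swap]⟩

/-- An edge of period at most two whose endpoints are not both fixed either has an endpoint in a
2-cycle of `σ`, or is of the form `{a, σ² a}`. -/
lemma card_fixed_edges_sq_le {n : ℕ} (σ : Equiv.Perm (Fin n)) :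
    ((edgesIn (fixSet σ))ᶜ.filter fun e => edgePerm σ (edgePerm σ e) = e).card ≤
      2 * (twoCyc σ).card * n + n := by
  set G : Finset (Fin n) := twoCyc σ ∪ (twoCyc σ).image σ with hG
  have hGc : G.card ≤ 2 * (twoCyc σ).card := by
    have h1 := Finset.card_union_le (twoCyc σ) ((twoCyc σ).image σ)
    have h2 := Finset.card_image_le (s := twoCyc σ) (f := σ)
    rw [hG]; omega
  have hmem : ∀ i, σ (σ i) = i → σ i ≠ i → i ∈ G := by
    intro i h1 h2
    rw [hG, Finset.mem_union, Finset.mem_image]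
    rcases lt_or_gt_of_ne h2 with h | h
    · exact Or.inr ⟨σ i, mem_twoCyc.mpr ⟨by rwa [h1], by rw [h1]⟩, h1⟩
    · exact Or.inl (mem_twoCyc.mpr ⟨h, h1⟩)
  rw [← Finset.card_image_of_injective _ Subtype.val_injective]
  refine (Finset.card_le_card (t := (G ×ˢ Finset.univ).image (fun p => s(p.1, p.2)) ∪
    Finset.univ.image fun i => s(i, σ (σ i))) fun z hz => ?_).trans ?_
  · obtain ⟨⟨z, hz0⟩, hz1, rfl⟩ := Finset.mem_image.mp hz
    rw [Finset.mem_filter, Finset.mem_compl, mem_edgesIn] at hz1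
    simp only [edgePerm_apply, edgeMap, Subtype.mk.injEq] at hz1
    induction z using Sym2.ind with
    | _ a b =>
      simp only [Sym2.mem_iff, forall_eq_or_imp, forall_eq, mem_fixSet, Sym2.map_mk,
        Sym2.eq_iff, not_and_or] at hz1
      rw [Finset.mem_union, Finset.mem_image, Finset.mem_image]
      obtain ⟨hn, ⟨h1, h2⟩ | ⟨h1, h2⟩⟩ := hz1
      · left
        rcases hn with h | h
        · exact ⟨(a, b), Finset.mem_product.mpr ⟨hmem a h1 h, Finset.mem_univ _⟩, rfl⟩
        · exact ⟨(b, a), Finset.mem_product.mpr ⟨hmem b h2 h, Finset.mem_univ _⟩, Sym2.eq_swap⟩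
      · right
        exact ⟨a, Finset.mem_univ _, by rw [h1]⟩
  · refine (Finset.card_union_le _ _).trans (add_le_add ?_ ?_)
    · refine Finset.card_image_le.trans ?_
      rw [Finset.card_product, Finset.card_univ, Fintype.card_fin]
      exact Nat.mul_le_mul_right _ hGc
    · refine Finset.card_image_le.trans ?_
      rw [Finset.card_univ, Fintype.card_fin]

/-- The exponent per 2-cycle of `σ`, and also the constant term of the exponent, in the bounds for
`det (1 - tM)⁻¹` when `t ≤ τ`. -/
def cycErr (n : ℕ) (τ : ℝ) : ℝ := τ + τ ^ 2 * n + τ ^ 3 * n ^ 2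

lemma inv_det_compl_le {n : ℕ} (σ : Equiv.Perm (Fin n)) {t τ : ℝ} (h0 : 0 ≤ t) (h1 : t ≤ 1 / 2)
    (ht : t ≤ τ) :
    ((1 - t • subPerm (edgePerm σ) (edgesIn (fixSet σ))ᶜ).det)⁻¹ ≤
      Real.exp (cycErr n τ * (twoCyc σ).card + cycErr n τ) := by
  refine (inv_det_le (edgePerm σ) (edgesIn (fixSet σ))ᶜ h0 h1).trans (Real.exp_le_exp.mpr ?_)
  have c1 : (((edgesIn (fixSet σ))ᶜ.filter fun e => edgePerm σ e = e).card : ℝ) ≤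
      (twoCyc σ).card := by exact_mod_cast card_fixed_edges_le σ
  have c2 : (((edgesIn (fixSet σ))ᶜ.filter fun e => edgePerm σ (edgePerm σ e) = e).card : ℝ) ≤
      2 * (twoCyc σ).card * n + n := by exact_mod_cast card_fixed_edges_sq_le σ
  have c3 : (2 : ℝ) * Fintype.card (Edge n) ≤ (n : ℝ) ^ 2 := by
    exact_mod_cast two_mul_card_edge_le n
  have hτ : 0 ≤ τ := h0.trans ht
  have t2 : t ^ 2 ≤ τ ^ 2 := by gcongr
  have t3 : t ^ 3 ≤ τ ^ 3 := by gcongr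
  set y : ℝ := ((twoCyc σ).card : ℝ)
  have hy : 0 ≤ y := Nat.cast_nonneg _
  have hn : (0 : ℝ) ≤ n := Nat.cast_nonneg _
  have b1 : t * (((edgesIn (fixSet σ))ᶜ.filter fun e => edgePerm σ e = e).card : ℝ) ≤ τ * y :=
    mul_le_mul ht c1 (Nat.cast_nonneg _) hτ
  have b2 : t ^ 2 / 2 * (((edgesIn (fixSet σ))ᶜ.filter
      fun e => edgePerm σ (edgePerm σ e) = e).card : ℝ) ≤ τ ^ 2 / 2 * (2 * y * n + n) :=
    mul_le_mul (by linarith) c2 (Nat.cast_nonneg _) (by positivity)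
  have b3 : t ^ 3 * (Fintype.card (Edge n) : ℝ) ≤ τ ^ 3 * ((n : ℝ) ^ 2 / 2) :=
    mul_le_mul t3 (by linarith) (Nat.cast_nonneg _) (by positivity)
  unfold cycErr
  have p1 : 0 ≤ τ ^ 2 * n := by positivity
  have p2 : 0 ≤ τ ^ 3 * (n : ℝ) ^ 2 := by positivity
  have p3 : 0 ≤ τ ^ 3 * (n : ℝ) ^ 2 * y := by positivity
  nlinarith

/-- The edges inside the fixed-point set are fixed, and there are at most `k² / 2` of them for `k` fixed
vertices; the others are treated as in `inv_det_compl_le`. -/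
lemma inv_det_univ_le {n : ℕ} (σ : Equiv.Perm (Fin n)) {t τ : ℝ} (h0 : 0 ≤ t) (h1 : t ≤ 1 / 2)
    (ht : t ≤ τ) :
    ((1 - t • subPerm (edgePerm σ) Finset.univ).det)⁻¹ ≤
      Real.exp ((τ + τ ^ 2) * (fixSet σ).card ^ 2 / 2 +
        (cycErr n τ * (twoCyc σ).card + cycErr n τ)) := by
  refine (inv_det_le (edgePerm σ) Finset.univ h0 h1).trans (Real.exp_le_exp.mpr ?_)
  -- split off the edges whose endpoints are both fixed
  have hsplit : ∀ p : Edge n → Prop, ∀ _ : DecidablePred p,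
      (((Finset.univ : Finset (Edge n)).filter p).card : ℝ) ≤
      (fixSet σ).card ^ 2 / 2 + ((edgesIn (fixSet σ))ᶜ.filter p).card := by
    intro p _
    have hs : (Finset.univ : Finset (Edge n)).filter p ⊆
        edgesIn (fixSet σ) ∪ (edgesIn (fixSet σ))ᶜ.filter p := by
      intro e he
      by_cases h : e ∈ edgesIn (fixSet σ)
      · exact Finset.mem_union_left _ h
      · refine Finset.mem_union_right _ (Finset.mem_filter.mpr ⟨Finset.mem_compl.mpr h, ?_⟩)
        exact (Finset.mem_filter.mp he).2
    have h1 := (Finset.card_le_card hs).trans (Finset.card_union_le _ _)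
    have h2 : (((Finset.univ : Finset (Edge n)).filter p).card : ℝ) ≤
      (edgesIn (fixSet σ)).card + ((edgesIn (fixSet σ))ᶜ.filter p).card := by exact_mod_cast h1
    have h3 : (2 : ℝ) * (edgesIn (fixSet σ)).card ≤ ((fixSet σ).card : ℝ) ^ 2 := by
      exact_mod_cast two_mul_card_edgesIn_le (fixSet σ)
    linarith
  have c1 : (((edgesIn (fixSet σ))ᶜ.filter fun e => edgePerm σ e = e).card : ℝ) ≤
      (twoCyc σ).card := by exact_mod_cast card_fixed_edges_le σ
  have c2 : (((edgesIn (fixSet σ))ᶜ.filter fun e => edgePerm σ (edgePerm σ e) = e).card : ℝ) ≤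
      2 * (twoCyc σ).card * n + n := by exact_mod_cast card_fixed_edges_sq_le σ
  have d1 := hsplit (fun e => edgePerm σ e = e) inferInstance
  have d2 := hsplit (fun e => edgePerm σ (edgePerm σ e) = e) inferInstance
  have c3 : (2 : ℝ) * Fintype.card (Edge n) ≤ (n : ℝ) ^ 2 := by
    exact_mod_cast two_mul_card_edge_le n
  have hτ : 0 ≤ τ := h0.trans ht
  have t2 : t ^ 2 ≤ τ ^ 2 := by gcongr
  have t3 : t ^ 3 ≤ τ ^ 3 := by gcongr
  set y : ℝ := ((twoCyc σ).card : ℝ)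
  set K : ℝ := (fixSet σ).card ^ 2
  have hK : 0 ≤ K := by positivity
  have hy : 0 ≤ y := Nat.cast_nonneg _
  have hn : (0 : ℝ) ≤ n := Nat.cast_nonneg _
  have b1 : t * ((Finset.univ.filter fun e => edgePerm σ e = e).card : ℝ) ≤ τ * (K / 2 + y) :=
    mul_le_mul ht (d1.trans (by linarith)) (Nat.cast_nonneg _) hτ
  have b2 : t ^ 2 / 2 * ((Finset.univ.filter fun e => edgePerm σ (edgePerm σ e) = e).card : ℝ) ≤
      τ ^ 2 / 2 * (K / 2 + (2 * y * n + n)) :=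
    mul_le_mul (by linarith) (d2.trans (by linarith)) (Nat.cast_nonneg _) (by positivity)
  have b3 : t ^ 3 * (Fintype.card (Edge n) : ℝ) ≤ τ ^ 3 * ((n : ℝ) ^ 2 / 2) :=
    mul_le_mul t3 (by linarith) (Nat.cast_nonneg _) (by positivity)
  unfold cycErr
  have p1 : 0 ≤ τ ^ 2 * n := by positivity
  have p2 : 0 ≤ τ ^ 3 * (n : ℝ) ^ 2 := by positivity
  have p3 : 0 ≤ τ ^ 3 * (n : ℝ) ^ 2 * y := by positivity
  have p4 : 0 ≤ τ ^ 2 * K := by positivity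
  nlinarith

/-! ### Explicit bounds for the two error terms -/

/-- The truncation threshold for the likelihood ratio on a vertex set of size `k`. -/
def thr (η τ : ℝ) (k : ℕ) : ℝ := Real.exp ((1 + η) * τ * k ^ 2 / 4)

lemma inv_sqrt_le_exp {v : ℝ} (h1 : v ≤ 1 / 2) :
    (√(1 - v))⁻¹ ≤ Real.exp (v * (1 + 2 * v) / 2) := by
  have hv : 0 < 1 - v := by linarith
  have h2 : (1 - v)⁻¹ ≤ Real.exp (v * (1 + 2 * v)) := by
    refine le_trans ?_ (Real.add_one_le_exp _)
    rw [inv_le_iff_one_le_mul₀ hv]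
    nlinarith [mul_nonneg (sq_nonneg v) (by linarith : 0 ≤ 1 - 2 * v)]
  rw [← Real.sqrt_inv]
  refine (Real.sqrt_le_sqrt h2).trans_eq ?_
  rw [Real.exp_half]

lemma tiltMoment_le {r l τ : ℝ} (hl0 : 0 ≤ l) (hl1 : l ≤ 1) (ht : r ^ 2 ≤ τ) (hτ : τ ≤ 1 / 2) :
    tiltMoment r l ≤ Real.exp (l * (1 + l) / 2 * (τ * (1 + 2 * τ))) := by
  have h0 : 0 ≤ r ^ 2 := sq_nonneg r
  have hτ0 : 0 ≤ τ := h0.trans ht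
  have hl2 : l ^ 2 ≤ 1 := by nlinarith
  have hlr : l ^ 2 * r ^ 2 ≤ r ^ 2 := by nlinarith
  have a1 := inv_sqrt_le_exp (ht.trans hτ)
  have a2 := inv_sqrt_le_exp (v := l ^ 2 * r ^ 2) (by linarith)
  unfold tiltMoment
  calc _ ≤ Real.exp (r ^ 2 * (1 + 2 * r ^ 2) / 2) ^ l *
        Real.exp (l ^ 2 * r ^ 2 * (1 + 2 * (l ^ 2 * r ^ 2)) / 2) := by
        gcongr
    _ = Real.exp (r ^ 2 * (1 + 2 * r ^ 2) / 2 * l +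
        l ^ 2 * r ^ 2 * (1 + 2 * (l ^ 2 * r ^ 2)) / 2) := by
        rw [← Real.exp_mul, Real.exp_add]
    _ ≤ _ := by
        refine Real.exp_le_exp.mpr ?_
        have b1 : r ^ 2 * (1 + 2 * r ^ 2) ≤ τ * (1 + 2 * τ) := by gcongr
        have b2 : l ^ 2 * r ^ 2 * (1 + 2 * (l ^ 2 * r ^ 2)) ≤ l ^ 2 * (τ * (1 + 2 * τ)) := by
          rw [mul_assoc]
          gcongr
          linarith
        have b3 := mul_le_mul_of_nonneg_right b1 hl0
        nlinarith

/-- The tilt `l = η / 2` makes the exponent of every term negative of order `η² τ n²`. -/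
lemma failBound_le {n : ℕ} {r η τ : ℝ} (hη0 : 0 ≤ η) (hη1 : η ≤ 1) (ht : r ^ 2 ≤ τ)
    (hτ : 16 * τ ≤ η) :
    failBound n r (η / 2) (thr η τ) ≤ 2 ^ n * Real.exp (-(η ^ 2 * τ * n ^ 2 / 128)) := by
  have hτ0 : 0 ≤ τ := (sq_nonneg r).trans ht
  have hterm : ∀ S ∈ (Finset.univ.filter fun S : Finset (Fin n) => n ≤ 2 * S.card),
      (thr η τ S.card ^ (η / 2))⁻¹ * tiltMoment r (η / 2) ^ (edgesIn S).card ≤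
        Real.exp (-(η ^ 2 * τ * n ^ 2 / 128)) := by
    intro S hS
    have hk : n ≤ 2 * S.card := (Finset.mem_filter.mp hS).2
    have hk' : (n : ℝ) ≤ 2 * S.card := by exact_mod_cast hk
    have hk2 : (n : ℝ) ^ 2 ≤ 4 * (S.card : ℝ) ^ 2 := by
      have := pow_le_pow_left₀ (Nat.cast_nonneg n) hk' 2
      linarith [this, mul_pow (2 : ℝ) (S.card : ℝ) 2]
    have hN : 2 * ((edgesIn S).card : ℝ) ≤ (S.card : ℝ) ^ 2 := by
      exact_mod_cast two_mul_card_edgesIn_le S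
    set K : ℝ := (S.card : ℝ) ^ 2
    have hm := tiltMoment_le (r := r) (l := η / 2) (by linarith) (by linarith) ht (by linarith)
    set c : ℝ := η / 2 * (1 + η / 2) / 2 * (τ * (1 + 2 * τ)) with hc
    have hc0 : 0 ≤ c := by positivity
    calc _ ≤ (thr η τ S.card ^ (η / 2))⁻¹ * Real.exp c ^ (edgesIn S).card := by
          gcongr
          · exact inv_nonneg.mpr (Real.rpow_nonneg (Real.exp_pos _).le _)
          · exact tiltMoment_nonneg _ _
      _ = Real.exp (-((1 + η) * τ * K / 4 * (η / 2)) + (edgesIn S).card * c) := by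
          rw [thr, ← Real.exp_mul, ← Real.exp_neg, ← Real.exp_nat_mul, Real.exp_add]
      _ ≤ _ := by
          refine Real.exp_le_exp.mpr ?_
          have b1 : ((edgesIn S).card : ℝ) * c ≤ K / 2 * c := by
            gcongr; linarith
          have b2 : (1 + η / 2) * (1 + 2 * τ) ≤ 1 + 3 * η / 4 := by nlinarith
          have hKτ : 0 ≤ K * τ * η := by positivity
          have b3 := mul_le_mul_of_nonneg_left b2 hKτ
          have b4 : η ^ 2 * τ * (n : ℝ) ^ 2 ≤ η ^ 2 * τ * (4 * K) := by gcongr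
          rw [hc] at b1
          nlinarith
  unfold failBound
  refine (Finset.sum_le_card_nsmul _ _ _ hterm).trans ?_
  rw [nsmul_eq_mul]
  gcongr
  have := Finset.card_filter_le (Finset.univ : Finset (Finset (Fin n))) fun S => n ≤ 2 * S.card
  rw [Finset.card_univ, Fintype.card_finset, Fintype.card_fin] at this
  exact_mod_cast this

lemma inv_factorial_le (k : ℕ) (hk : 0 < k) :
    (k.factorial : ℝ)⁻¹ ≤ Real.exp (k - k * Real.log k) := by
  have hk' : (0 : ℝ) < k := by exact_mod_cast hk
  have h := Real.pow_div_factorial_le_exp (k : ℝ) hk'.le k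
  rw [Real.exp_sub, mul_comm, Real.exp_mul, Real.exp_log hk', Real.rpow_natCast,
    le_div_iff₀ (by positivity)]
  calc _ = (k : ℝ) ^ k / k.factorial := by rw [div_eq_inv_mul]
    _ ≤ _ := h

/-- The averaged second moment. The first summand bounds the permutations with fewer than
`k₀ = n ^ (1 - ε / 16)` fixed points, the second one those with at least `k₀` fixed points. -/
lemma pairSum_le {n : ℕ} {r ε τ k₀ δ δ' : ℝ} (hn : 1 ≤ n) (hε0 : 0 < ε) (hε1 : ε ≤ 1)
    (hτ : τ = (4 - ε) * Real.log n / n) (ht : r ^ 2 ≤ τ) (hτε : τ ≤ ε / 8)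
    (hk₀ : k₀ = (n : ℝ) ^ (1 - ε / 16)) (hk₀n : 2 * k₀ ≤ n) (hlog : 2 ≤ ε / 16 * Real.log n)
    (hδ : δ = cycErr n τ) (hδ' : δ' = (τ + τ ^ 2) * k₀ / 2) :
    (n.factorial : ℝ)⁻¹ * ∑ σ : Equiv.Perm (Fin n), pairBound r (thr (ε / 8) τ) σ ≤
      Real.exp δ * (Real.exp (Real.exp δ' - 1) * Real.exp (Real.exp δ - 1)) +
        Real.exp δ * ((n + 1) * Real.exp (-k₀) * Real.exp (Real.exp δ - 1)) := by
  have hτ0 : 0 ≤ τ := (sq_nonneg r).trans ht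
  have hnR : (1 : ℝ) ≤ n := by exact_mod_cast hn
  have hn0 : (0 : ℝ) < n := by linarith
  have hlog0 : 0 ≤ Real.log n := Real.log_nonneg hnR
  have hk₀pos : 0 < k₀ := by rw [hk₀]; positivity
  have hδ0 : 0 ≤ δ := by rw [hδ, cycErr]; positivity
  have hδ'0 : 0 ≤ δ' := by rw [hδ']; positivity
  have hτn : τ * n = (4 - ε) * Real.log n := by rw [hτ]; field_simp
  set a : ℝ := 1 - ε / 8 with ha
  set s : ℝ := Real.exp δ' - 1 with hs
  set u : ℝ := Real.exp δ - 1 with hu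
  have hs0 : 0 ≤ s := by rw [hs]; linarith [Real.one_le_exp hδ'0]
  have hu0 : 0 ≤ u := by rw [hu]; linarith [Real.one_le_exp hδ0]
  have hexpy : ∀ y : ℕ, Real.exp (δ * y + δ) = Real.exp δ * (1 + u) ^ y := by
    intro y
    rw [hu, add_sub_cancel, ← Real.exp_nat_mul, ← Real.exp_add]; ring_nf
  have hpw : ∀ σ : Equiv.Perm (Fin n), pairBound r (thr (ε / 8) τ) σ ≤
      Real.exp δ * ((1 + s) ^ (fixSet σ).card * (1 + u) ^ (twoCyc σ).card) +
      Real.exp δ * ((if k₀ ≤ (fixSet σ).card then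
        Real.exp (a * (fixSet σ).card * Real.log n) else 0) * (1 + u) ^ (twoCyc σ).card) := by
    intro σ
    have hkn : ((fixSet σ).card : ℝ) ≤ n := by
      have := Finset.card_le_univ (fixSet σ)
      rw [Fintype.card_fin] at this
      exact_mod_cast this
    set k := (fixSet σ).card with hk
    have hkR : (0 : ℝ) ≤ k := Nat.cast_nonneg _
    have hpos1 : 0 ≤ Real.exp δ * ((1 + s) ^ k * (1 + u) ^ (twoCyc σ).card) := by positivity
    have hE := hexpy (twoCyc σ).card
    unfold pairBound
    rw [← hk]
    split_ifs with h1 h2 h2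
    · -- at least half of the vertices are fixed
      refine le_trans ?_ (le_add_of_nonneg_left hpos1)
      have hd := inv_det_compl_le σ (sq_nonneg r) (by linarith) ht
      rw [← hδ, hE] at hd
      have hT : thr (ε / 8) τ k ≤ Real.exp (a * k * Real.log n) := by
        refine Real.exp_le_exp.mpr ?_
        have e1 : τ * (k : ℝ) ^ 2 ≤ τ * n * k := by
          rw [sq, ← mul_assoc]
          have := mul_le_mul_of_nonneg_left hkn (mul_nonneg hτ0 hkR)
          linarith
        rw [hτn] at e1
        have e2 : (1 + ε / 8) * (τ * (k : ℝ) ^ 2) ≤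
            (1 + ε / 8) * ((4 - ε) * Real.log n * k) := by gcongr
        have e3 : 0 ≤ Real.log n * k := by positivity
        have e4 : (1 + ε / 8) * (4 - ε) ≤ 4 * a := by rw [ha]; nlinarith
        have e5 := mul_le_mul_of_nonneg_right e4 e3
        linarith
      calc _ ≤ Real.exp (a * k * Real.log n) * (Real.exp δ * (1 + u) ^ (twoCyc σ).card) := by
            refine mul_le_mul hT hd ?_ (Real.exp_pos _).le
            exact (inv_pos.mpr (det_one_sub_pos _ _ (sq_nonneg r) (by linarith))).le
        _ = _ := by ring
    · exfalso
      have : (n : ℝ) ≤ 2 * k := by exact_mod_cast h1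
      linarith
    · -- intermediate number of fixed points
      refine le_trans ?_ (le_add_of_nonneg_left hpos1)
      have hd := inv_det_univ_le σ (sq_nonneg r) (by linarith) ht
      rw [← hδ, Real.exp_add, hE, ← hk] at hd
      have h1' : 2 * (k : ℝ) ≤ n := by
        have : 2 * k ≤ n := by omega
        exact_mod_cast this
      have hT : Real.exp ((τ + τ ^ 2) * (k : ℝ) ^ 2 / 2) ≤ Real.exp (a * k * Real.log n) := by
        refine Real.exp_le_exp.mpr ?_
        have e1 : τ * (2 * (k : ℝ) ^ 2) ≤ τ * n * k := by
          have := mul_le_mul_of_nonneg_left h1' (mul_nonneg hτ0 hkR)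
          linarith
        rw [hτn] at e1
        have e2 : (1 + τ) * (τ * (2 * (k : ℝ) ^ 2)) ≤
            (1 + ε / 8) * ((4 - ε) * Real.log n * k) := by
          gcongr
        have e3 : 0 ≤ Real.log n * k := by positivity
        have e4 : (1 + ε / 8) * (4 - ε) ≤ 4 * a := by rw [ha]; nlinarith
        have e5 := mul_le_mul_of_nonneg_right e4 e3
        linarith
      refine hd.trans ?_
      calc _ ≤ Real.exp (a * k * Real.log n) * (Real.exp δ * (1 + u) ^ (twoCyc σ).card) := by
            gcongr
        _ = _ := by ring
    · -- few fixed points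
      rw [zero_mul, mul_zero, add_zero]
      have hd := inv_det_univ_le σ (sq_nonneg r) (by linarith) ht
      rw [← hδ, Real.exp_add, hE, ← hk] at hd
      have hT : Real.exp ((τ + τ ^ 2) * (k : ℝ) ^ 2 / 2) ≤ (1 + s) ^ k := by
        rw [hs, add_sub_cancel, ← Real.exp_nat_mul]
        refine Real.exp_le_exp.mpr ?_
        rw [hδ']
        have e1 : (k : ℝ) * k ≤ k * k₀ := by
          gcongr; exact (not_le.mp h2).le
        have e2 : 0 ≤ τ + τ ^ 2 := by positivity
        linarith [mul_le_mul_of_nonneg_left e1 e2]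
      refine hd.trans ?_
      calc _ ≤ (1 + s) ^ k * (Real.exp δ * (1 + u) ^ (twoCyc σ).card) := by gcongr
        _ = _ := by ring
  have hc0 : (0 : ℝ) ≤ (n.factorial : ℝ)⁻¹ := by positivity
  refine (mul_le_mul_of_nonneg_left (Finset.sum_le_sum fun σ _ => hpw σ) hc0).trans ?_
  rw [Finset.sum_add_distrib, mul_add, ← Finset.mul_sum, ← Finset.mul_sum, mul_left_comm,
    mul_left_comm _ (Real.exp δ)]
  refine add_le_add (mul_le_mul_of_nonneg_left (sum_fix_twoCyc_le n hs0 hu0) (Real.exp_pos _).le)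
    (mul_le_mul_of_nonneg_left ?_ (Real.exp_pos _).le)
  -- sort the permutations by their number `k` of fixed points
  rw [← Finset.sum_fiberwise_of_maps_to (t := Finset.range (n + 1))
    (g := fun σ : Equiv.Perm (Fin n) => (fixSet σ).card) (fun σ _ => by
      have := Finset.card_le_univ (fixSet σ)
      rw [Fintype.card_fin] at this
      rw [Finset.mem_range]; omega), Finset.mul_sum]
  have hterm : ∀ k ∈ Finset.range (n + 1), (n.factorial : ℝ)⁻¹ *
      ∑ σ : Equiv.Perm (Fin n) with (fixSet σ).card = k,
        (if k₀ ≤ (fixSet σ).card then Real.exp (a * (fixSet σ).card * Real.log n) else 0) *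
          (1 + u) ^ (twoCyc σ).card ≤ Real.exp (-k₀) * Real.exp u := by
    intro k _
    have hcong : ∑ σ : Equiv.Perm (Fin n) with (fixSet σ).card = k,
        (if k₀ ≤ (fixSet σ).card then Real.exp (a * (fixSet σ).card * Real.log n) else 0) *
          (1 + u) ^ (twoCyc σ).card =
        (if k₀ ≤ k then Real.exp (a * k * Real.log n) else 0) *
          ∑ σ : Equiv.Perm (Fin n) with (fixSet σ).card = k, (1 + u) ^ (twoCyc σ).card := by
      rw [Finset.mul_sum]
      refine Finset.sum_congr rfl fun σ hσ => ?_
      rw [(Finset.mem_filter.mp hσ).2]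
    rw [hcong, mul_left_comm]
    split_ifs with hk
    · have hkpos : (0 : ℝ) < k := hk₀pos.trans_le hk
      have hlogk : (1 - ε / 16) * Real.log n ≤ Real.log k := by
        have := Real.log_le_log hk₀pos hk
        rwa [hk₀, Real.log_rpow hn0] at this
      have hf := inv_factorial_le k (by exact_mod_cast hkpos)
      calc _ ≤ Real.exp (a * k * Real.log n) *
            (Real.exp (k - k * Real.log k) * Real.exp u) := by
            refine mul_le_mul_of_nonneg_left ((sum_twoCyc_fix_eq_le n k hu0).trans ?_)
              (Real.exp_pos _).le
            exact mul_le_mul_of_nonneg_right hf (Real.exp_pos _).le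
        _ = Real.exp (a * k * Real.log n + (k - k * Real.log k)) * Real.exp u := by
            rw [Real.exp_add]; ring
        _ ≤ _ := by
            gcongr
            have e1 := mul_le_mul_of_nonneg_left hlogk hkpos.le
            have e2 := mul_le_mul_of_nonneg_left hlog hkpos.le
            rw [ha]
            linarith
    · rw [zero_mul]; positivity
  refine (Finset.sum_le_card_nsmul _ _ _ hterm).trans_eq ?_
  rw [Finset.card_range, nsmul_eq_mul]
  push_cast
  ring

/-! ### Asymptotics -/

lemma tendsto_log_pow_div_rpow (m : ℕ) {c : ℝ} (hc : 0 < c) :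
    Tendsto (fun n : ℕ => Real.log n ^ m / (n : ℝ) ^ c) atTop (nhds 0) := by
  have := ((isLittleO_log_rpow_rpow_atTop (m : ℝ) hc).tendsto_div_nhds_zero).comp
    tendsto_natCast_atTop_atTop
  refine this.congr fun n => ?_
  simp only [Function.comp, Real.rpow_natCast]

/-- Theorem 1 of the paper, converse part: in the correlated Gaussian Wigner
detection problem, for every fixed `ε > 0`, if `ρ_n² ≤ (4-ε) log n / n` for all `n`, then
`TV(P_n^{ρ_n}, Q_n) → 0`, i.e. even weak detection is impossible. -/
theorem stmt1 (ε : ℝ) (hε : 0 < ε) (ρ : ℕ → ℝ) (hρ : ∀ n, ρ n ∈ Set.Icc (0 : ℝ) 1)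
    (h : ∀ n : ℕ, (ρ n) ^ 2 ≤ (4 - ε) * Real.log n / (n : ℝ)) :
    Tendsto (fun n => TV (PGauss n (ρ n)) (QGauss n)) atTop (nhds 0) := by
  -- it suffices to treat `ε ≤ 1`
  wlog hε1 : ε ≤ 1 generalizing ε
  · refine this 1 one_pos (fun n => (h n).trans ?_) le_rfl
    have : 0 ≤ Real.log n := Real.log_natCast_nonneg n
    gcongr
    linarith
  set τ : ℕ → ℝ := fun n => (4 - ε) * Real.log n / n with hτdef
  set k₀ : ℕ → ℝ := fun n => (n : ℝ) ^ (1 - ε / 16) with hk₀def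
  set δ : ℕ → ℝ := fun n => cycErr n (τ n) with hδdef
  set δ' : ℕ → ℝ := fun n => (τ n + τ n ^ 2) * k₀ n / 2 with hδ'def
  set γ : ℕ → ℝ := fun n =>
    Real.exp (δ n) * (Real.exp (Real.exp (δ' n) - 1) * Real.exp (Real.exp (δ n) - 1)) +
      Real.exp (δ n) * ((n + 1) * Real.exp (-k₀ n) * Real.exp (Real.exp (δ n) - 1)) - 1 with hγdef
  have hnat : Tendsto (fun n : ℕ => (n : ℝ)) atTop atTop := tendsto_natCast_atTop_atTop
  have hlog : Tendsto (fun n : ℕ => Real.log n) atTop atTop := Real.tendsto_log_atTop.comp hnat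
  have hτ0 : ∀ n, 0 ≤ τ n := fun n => (sq_nonneg _).trans (h n)
  have hlp : ∀ m : ℕ, Tendsto (fun n : ℕ => Real.log n ^ m / (n : ℝ)) atTop (nhds 0) := by
    intro m
    simpa using tendsto_log_pow_div_rpow m one_pos
  have hτlim : Tendsto τ atTop (nhds 0) := by
    have := (hlp 1).const_mul (4 - ε)
    rw [mul_zero] at this
    refine this.congr fun n => ?_
    rw [hτdef]; ring
  have hδlim : Tendsto δ atTop (nhds 0) := by
    have := (hτlim.add ((hlp 2).const_mul ((4 - ε) ^ 2))).add ((hlp 3).const_mul ((4 - ε) ^ 3))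
    simp only [mul_zero, add_zero] at this
    refine this.congr' ?_
    filter_upwards [eventually_gt_atTop 0] with n hn
    have hn' : (n : ℝ) ≠ 0 := by positivity
    simp only [hδdef, cycErr, hτdef]
    field_simp
  have hδ'lim : Tendsto δ' atTop (nhds 0) := by
    have h1 : Tendsto (fun n => τ n * k₀ n) atTop (nhds 0) := by
      have := (tendsto_log_pow_div_rpow 1 (c := ε / 16) (by positivity)).const_mul (4 - ε)
      rw [mul_zero] at this
      refine this.congr' ?_
      filter_upwards [eventually_gt_atTop 0] with n hn
      have hn' : (0 : ℝ) < n := by positivity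
      simp only [hτdef, hk₀def]
      rw [Real.rpow_sub hn', Real.rpow_one]
      field_simp
    have := (((hτlim.const_add 1).mul h1).div_const 2)
    simp only [mul_zero, zero_div] at this
    refine this.congr fun n => ?_
    simp only [hδ'def]; ring
  have hδ0 : ∀ n, 0 ≤ δ n := fun n => by
    have := hτ0 n
    simp only [hδdef, cycErr]; positivity
  have hδ'0 : ∀ n, 0 ≤ δ' n := fun n => by
    have := hτ0 n
    simp only [hδ'def, hk₀def]; positivity
  have hk₀exp : Tendsto (fun n : ℕ => ((n : ℝ) + 1) * Real.exp (-k₀ n)) atTop (nhds 0) := by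
    have hsq : Tendsto (fun n : ℕ => √(n : ℝ)) atTop atTop := Real.tendsto_sqrt_atTop.comp hnat
    have h1 := ((Real.tendsto_pow_mul_exp_neg_atTop_nhds_zero 2).add
      (Real.tendsto_pow_mul_exp_neg_atTop_nhds_zero 0)).comp hsq
    rw [add_zero] at h1
    refine squeeze_zero' (Eventually.of_forall fun n => by positivity) ?_ h1
    filter_upwards [eventually_ge_atTop 1] with n hn
    have hn' : (1 : ℝ) ≤ n := by exact_mod_cast hn
    have h2 : √(n : ℝ) ≤ k₀ n := by
      rw [Real.sqrt_eq_rpow]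
      exact Real.rpow_le_rpow_of_exponent_le hn' (by linarith)
    simp only [Function.comp, Real.sq_sqrt (Nat.cast_nonneg n), pow_zero]
    rw [← add_mul]
    gcongr
  have hγlim : Tendsto γ atTop (nhds 0) := by
    have e0 : ∀ {f : ℕ → ℝ}, Tendsto f atTop (nhds 0) →
        Tendsto (fun n => Real.exp (f n)) atTop (nhds 1) := fun hf => by
      simpa [Function.comp_def] using (Real.continuous_exp.tendsto 0).comp hf
    have e1 : ∀ {f : ℕ → ℝ}, Tendsto f atTop (nhds 0) →
        Tendsto (fun n => Real.exp (Real.exp (f n) - 1)) atTop (nhds 1) := fun hf =>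
      e0 (by simpa using (e0 hf).sub_const 1)
    have := ((((e0 hδlim).mul ((e1 hδ'lim).mul (e1 hδlim)))).add
      ((e0 hδlim).mul (hk₀exp.mul (e1 hδlim)))).sub_const 1
    simpa using this
  have hγ0 : ∀ n, 0 ≤ γ n := fun n => by
    have a1 := Real.one_le_exp (hδ0 n)
    have a2 := Real.one_le_exp (hδ'0 n)
    have a3 : 1 ≤ Real.exp (Real.exp (δ' n) - 1) := Real.one_le_exp (by linarith)
    have a4 : 1 ≤ Real.exp (Real.exp (δ n) - 1) := Real.one_le_exp (by linarith)
    have a5 := one_le_mul_of_one_le_of_one_le a1 (one_le_mul_of_one_le_of_one_le a3 a4)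
    have a6 : 0 ≤ Real.exp (δ n) *
      (((n : ℝ) + 1) * Real.exp (-k₀ n) * Real.exp (Real.exp (δ n) - 1)) := by positivity
    simp only [hγdef]; linarith
  have hβlim : Tendsto (fun n : ℕ => Real.exp (-(n : ℝ))) atTop (nhds 0) :=
    Real.tendsto_exp_neg_atTop_nhds_zero.comp hnat
  have hfin : Tendsto (fun n : ℕ => Real.exp (-(n : ℝ)) + √(γ n + 2 * Real.exp (-(n : ℝ))))
      atTop (nhds 0) := by
    simpa using hβlim.add (hγlim.add (hβlim.const_mul 2)).sqrt
  refine squeeze_zero' (Eventually.of_forall fun n => Real.iSup_nonneg fun S => abs_nonneg _) ?_ hfin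
  set η : ℝ := ε / 8 with hη
  have hk₀n : ∀ᶠ n : ℕ in atTop, 2 * k₀ n ≤ n := by
    have := (tendsto_rpow_atTop (y := ε / 16) (by positivity)).comp hnat
    filter_upwards [this.eventually_ge_atTop 2, eventually_gt_atTop 0] with n h1 hn
    have hn' : (0 : ℝ) < n := by positivity
    simp only [hk₀def]
    rw [Real.rpow_sub hn', Real.rpow_one, mul_div_assoc', div_le_iff₀ (by positivity), mul_comm]
    gcongr
    exact h1
  filter_upwards [eventually_ge_atTop 1, hτlim.eventually_le_const (show 0 < η / 16 by positivity),
    hk₀n, hlog.eventually_ge_atTop (2 / (ε / 16)),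
    hlog.eventually_ge_atTop (2 / (3 * η ^ 2 / 128))] with n hn hτn hk hl hl2
  have hη1 : η ≤ 1 := by rw [hη]; linarith
  have hη0 : 0 < η := by positivity
  have hlε : 2 ≤ ε / 16 * Real.log n := by
    rwa [div_le_iff₀' (by positivity)] at hl
  rw [div_le_iff₀' (by positivity)] at hl2
  refine TV_le (l := η / 2) (T := thr η (τ n)) ?_ (by linarith) (by linarith)
    (fun k => Real.exp_pos _) (hγ0 n) ?_ ?_
  · linarith [h n]
  · refine (failBound_le hη0.le hη1 (h n) (by linarith)).trans ?_
    have h2 : (2 : ℝ) ^ n ≤ Real.exp n := by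
      have : (2 : ℝ) ≤ Real.exp 1 := by linarith [Real.add_one_le_exp (1 : ℝ)]
      calc (2 : ℝ) ^ n ≤ Real.exp 1 ^ n := by gcongr
        _ = _ := by rw [← Real.exp_nat_mul, mul_one]
    have hn' : (0 : ℝ) < n := by positivity
    calc _ ≤ Real.exp n * Real.exp (-(η ^ 2 * τ n * n ^ 2 / 128)) := by gcongr
      _ = Real.exp (n + -(η ^ 2 * τ n * n ^ 2 / 128)) := by rw [Real.exp_add]
      _ ≤ _ := by
        refine Real.exp_le_exp.mpr ?_
        have e1 : τ n * (n : ℝ) ^ 2 = (4 - ε) * Real.log n * n := by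
          simp only [hτdef]; field_simp
        have e2 : 3 * (Real.log n * n) ≤ (4 - ε) * Real.log n * n := by
          have : 0 ≤ Real.log n * n := mul_nonneg (Real.log_natCast_nonneg n) hn'.le
          nlinarith
        have e3 := mul_le_mul_of_nonneg_left e2 (sq_nonneg η)
        have e4 := mul_le_mul_of_nonneg_right hl2 hn'.le
        rw [← e1] at e3
        nlinarith
  · refine (pairSum_le hn hε hε1 rfl (h n) (by linarith) rfl hk hlε rfl rfl).trans_eq ?_
    simp only [hγdef, hδ'def, hδdef]; ring

end
end
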